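/- arXiv:math/0412124 — 2 statements merged into one kernel-verified Lean document; each statement's English description precedes it below -/
import Mathlib

section
/- Let k be a field of characteristic zero and let U_n denote the restriction of the Tchebyshev transform of the second kind U to the 2^n-dimensional space k⟨a,b⟩_n of homogeneous ab-polynomials of degree n. Then U_n is diagonalizable, and its eigenvalues are exactly 2^{i+1} for 0 ≤ i ≤ n, with the eigenvalue 2^{i+1} occurring with multiplicity binomial(n, i). -/
open scoped TensorProduct

noncomputable section

namespace Tcheb

/-! ### The algebra `R⟨a,b⟩` of ab-polynomials -/

/-- Words in the two noncommuting letters `a` (encoded `true`) and `b` (encoded `false`). -/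
abbrev ABWord : Type := FreeMonoid Bool

/-- The ring `R⟨a,b⟩` of polynomials in two noncommuting variables `a` and `b`. -/
abbrev AB (R : Type) [CommRing R] : Type := MonoidAlgebra R ABWord

variable (R : Type) [CommRing R]

/-- The ab-monomial corresponding to a word. -/
def word (l : List Bool) : AB R := MonoidAlgebra.of R ABWord (FreeMonoid.ofList l)

/-- The variable `a`. -/
def av : AB R := word R [true]
/-- The variable `b`. -/
def bv : AB R := word R [false]
/-- `c = a + b`. -/
def cv : AB R := av R + bv R
/-- `d = ab + ba`. -/
def dv : AB R := av R * bv R + bv R * av R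
/-- `a - b`. -/
def ev : AB R := av R - bv R

/-- The linear map defined by prescribing values on the basis of ab-monomials. -/
def onBasis {M : Type} [AddCommMonoid M] [Module R M] (f : List Bool → M) :
    AB R →ₗ[R] M :=
  (Finsupp.lift M R ABWord fun w => f (FreeMonoid.toList w)) ∘ₗ
    (MonoidAlgebra.coeffLinearEquiv R).toLinearMap

/-- The algebra map `A` with `A(a) = 1`, `A(b) = 0`. -/
def Amap : AB R →ₐ[R] R :=
  MonoidAlgebra.lift R R ABWord (FreeMonoid.lift fun x => if x then (1 : R) else 0)

/-- The coproduct on `R⟨a,b⟩`: on an ab-monomial `u₁ ⋯ u_k` it is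
`Σ_{i=1}^k u₁ ⋯ u_{i-1} ⊗ u_{i+1} ⋯ u_k`. -/
def Delta : AB R →ₗ[R] AB R ⊗[R] AB R :=
  onBasis R fun w => ∑ i ∈ Finset.range w.length,
    word R (w.take i) ⊗ₜ[R] word R (w.drop (i + 1))

/-- The linear map `C(u) = 2·A(u) + Σ_u A(u₍₁₎)·A(u₍₂₎)`. -/
def Cmap : AB R →ₗ[R] R :=
  2 • (Amap R).toLinearMap +
    (LinearMap.mul' R R ∘ₗ
      TensorProduct.map (Amap R).toLinearMap (Amap R).toLinearMap) ∘ₗ Delta R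

/-- `κ(u) = A(u)·(a-b)^(deg u)` on homogeneous `u`, extended linearly. -/
def kappa : AB R →ₗ[R] AB R :=
  onBasis R fun w => Amap R (word R w) • ev R ^ w.length

/-- `ν(u) = C(u)·(a-b)^(deg u)` on homogeneous `u`, extended linearly. -/
def nuMap : AB R →ₗ[R] AB R :=
  onBasis R fun w => Cmap R (word R w) • ev R ^ w.length

end Tcheb

namespace Tcheb

/-- Cutting a word into the list of segments between the (sorted) cut positions. -/
def segments : List Bool → List ℕ → List (List Bool)
  | l, [] => [l]
  | l, i :: rest => l.take i :: segments (l.drop (i + 1)) (rest.map fun j => j - (i + 1))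
  termination_by _ cuts => cuts.length
  decreasing_by simp

variable (R : Type) [CommRing R]

/-- For segments `[s₁, …, s_k]` this is `ν(s₁)·b·ν(s₂)·b ⋯ b·ν(s_{k-1})·b·κ(s_k)`. -/
def chainProd : List (List Bool) → AB R
  | [] => 1
  | [s] => kappa R (word R s)
  | s :: rest => nuMap R (word R s) * bv R * chainProd rest

/-- The Tchebyshev transform (of the first kind) on ab-polynomials:
`T(u) = Σ_{k ≥ 1} Σ_u ν(u₍₁₎)·b·ν(u₍₂₎)·b ⋯ b·ν(u₍ₖ₋₁₎)·b·κ(u₍ₖ₎)`,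
where the inner sum is over the `k`-fold coproduct.  On the ab-monomial basis this
is the sum, over all sets of positions of deleted letters, of the corresponding
products over the resulting segments. -/
def Tmap : AB R →ₗ[R] AB R :=
  onBasis R fun w => ∑ S : Finset (Fin w.length),
    chainProd R (segments w ((S.sort (· ≤ ·)).map Fin.val))

/-- The `ω` map on a word: replace each occurrence of `ab` by `2d` and all
remaining letters by `c`. -/
def omegaWord : List Bool → AB R
  | [] => 1
  | true :: false :: rest => (2 * dv R) * omegaWord rest
  | _ :: rest => cv R * omegaWord rest

/-- The `ω` map of Billera–Ehrenborg–Readdy. -/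
def omegaMap : AB R →ₗ[R] AB R := onBasis R fun w => omegaWord R w

/-- The reversal involution `u ↦ u*` of ab-polynomials. -/
def revMap : AB R →ₗ[R] AB R := onBasis R fun w => word R w.reverse

/-- `H*(1) = 0` and `H*(u·a) = H*(u·b) = u`. -/
def Hstar : AB R →ₗ[R] AB R :=
  onBasis R fun w => if w = [] then 0 else word R w.dropLast

/-- The Tchebyshev transform of the second kind `U(u) = H*(T(u·a))`. -/
def Umap : AB R →ₗ[R] AB R := Hstar R ∘ₗ Tmap R ∘ₗ LinearMap.mulRight R (av R)

/-- `σ(u) = Σ_u κ(u₍₁₎)·b·T(u₍₂₎)`. -/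
def sigmaMap : AB R →ₗ[R] AB R :=
  LinearMap.mul' R (AB R) ∘ₗ
    TensorProduct.map (LinearMap.mulRight R (bv R) ∘ₗ kappa R) (Tmap R) ∘ₗ Delta R

/-! ### Graded posets and the ab-index -/

/-- `rk` is a rank function for a bounded poset: `rk ⊥ = 0` and covers raise rank by one. -/
def IsRankFun (α : Type) [PartialOrder α] [OrderBot α] (rk : α → ℕ) : Prop :=
  rk ⊥ = 0 ∧ ∀ x y : α, x ⋖ y → rk y = rk x + 1

/-- `f` lists the elements of a chain in increasing order with respect to the
strict order relation `lt`. -/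
def IsStrictChain {α : Type} (lt : α → α → Prop) {n : ℕ} (f : Fin (n + 1) → α) : Prop :=
  ∀ i j : Fin (n + 1), i < j → lt (f i) (f j)

/-- The weight of a chain `x₀ < x₁ < ⋯ < x_k`:
`(a-b)^{ρ(x₀,x₁)-1}·b·(a-b)^{ρ(x₁,x₂)-1}·b ⋯ b·(a-b)^{ρ(x_{k-1},x_k)-1}`. -/
def chainWt {α : Type} (rk : α → ℕ) {n : ℕ} (f : Fin (n + 1) → α) : AB R :=
  (List.intersperse (bv R)
    (List.ofFn fun i : Fin n => ev R ^ (rk (f i.succ) - rk (f i.castSucc) - 1))).prod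

/-- The ab-index `Ψ` of the graded poset with strict order relation `lt`, rank
function `rk`, minimum `b` and maximum `t`: the sum of the weights of all chains
from `b` to `t`. -/
def PsiRel {α : Type} (lt : α → α → Prop) (rk : α → ℕ) (b t : α) : AB R :=
  ∑ᶠ (n : ℕ), ∑ᶠ (f : Fin (n + 1) → α)
    (_ : IsStrictChain lt f ∧ f 0 = b ∧ f (Fin.last n) = t), chainWt R rk f

end Tcheb

namespace Tcheb

/-! ### The Tchebyshev transform of a graded poset -/

section TPoset

variable (α : Type) [PartialOrder α] [BoundedOrder α]

/-- The elements `[x,y]` of the Tchebyshev transform: intervals of `P ∪ {-1̂}`,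
i.e. pairs `(x,y)` with `x ∈ P ∪ {-1̂}`, `y ∈ P` and `x < y`. -/
def TPel : Type := {p : WithBot α × α // p.1 < (p.2 : WithBot α)}

/-- The underlying set of the Tchebyshev transform `T(P)`: the intervals `[x,y]`
together with a new maximum element (`none`). -/
def TP : Type := Option (TPel α)

/-- The cover relation of the Tchebyshev transform `T(P)`:
`[x,y] ⋖ [y,w]` and `[x,y] ⋖ [x,w]` whenever `y ⋖ w` in `P`, and `[x,1̂] ⋖ 1̂_{T(P)}`. -/
inductive TPcov : TP α → TP α → Prop
  | up {x : WithBot α} {y w : α} (h1 : x < (y : WithBot α))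
      (h2 : (y : WithBot α) < (w : WithBot α)) (hc : y ⋖ w) :
      TPcov (some ⟨(x, y), h1⟩) (some ⟨((y : WithBot α), w), h2⟩)
  | same {x : WithBot α} {y w : α} (h1 : x < (y : WithBot α))
      (h2 : x < (w : WithBot α)) (hc : y ⋖ w) :
      TPcov (some ⟨(x, y), h1⟩) (some ⟨(x, w), h2⟩)
  | top {x : WithBot α} (h1 : x < ((⊤ : α) : WithBot α)) :
      TPcov (some ⟨(x, (⊤ : α)), h1⟩) none

/-- The strict order relation of `T(P)`, generated by the cover relation. -/
def TPlt : TP α → TP α → Prop := Relation.TransGen (TPcov α)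

/-- The order relation of `T(P)`, generated by the cover relation. -/
def TPle : TP α → TP α → Prop := Relation.ReflTransGen (TPcov α)

/-- The minimum element `[-1̂, 0̂]` of `T(P)`. -/
def TPbot : TP α := some ⟨((⊥ : WithBot α), (⊥ : α)), WithBot.bot_lt_coe _⟩

/-- The maximum element `1̂_{T(P)}` of `T(P)`. -/
def TPtop : TP α := none

/-- The rank function of `T(P)`: `ρ([x,y]) = ρ(y)` and `ρ(1̂_{T(P)}) = ρ(P) + 1`. -/
def TPrk (rk : α → ℕ) : TP α → ℕ
  | some p => rk p.1.2
  | none => rk (⊤ : α) + 1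

theorem TPbot_ne_TPtop : TPbot α ≠ TPtop α := by exact Option.some_ne_none _

/-- The map `z : T(P) → P ∪ {2̂}` with `z([x,y]) = y` and `z(1̂_{T(P)}) = 2̂`. -/
def zmap : TP α → WithTop α
  | some p => (p.1.2 : WithTop α)
  | none => ⊤

/-- The number of elements of the interval `[u,v]` of `P`, for `u, v ∈ P ∪ {2̂}`. -/
def intervalCard (u v : WithTop α) : ℕ :=
  Set.ncard {t : α | u ≤ (t : WithTop α) ∧ (t : WithTop α) ≤ v}

end TPoset

/-! ### The dual diamond product -/

/-- The strict order relation of the dual diamond product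
`P ◇* Q = ((P ∖ {1̂}) × (Q ∖ {1̂})) ∪ {1̂}` (with `none` the new maximum), built from
the order relations `leA, ltA` and `leB, ltB` of the two factors. -/
def dsLT {A B : Type} (leA ltA : A → A → Prop) (leB ltB : B → B → Prop) :
    Option (A × B) → Option (A × B) → Prop
  | some p, some q => (leA p.1 q.1 ∧ leB p.2 q.2) ∧ (ltA p.1 q.1 ∨ ltB p.2 q.2)
  | some _, none => True
  | none, _ => False

/-! ### EL-labelings -/

/-- The list of edge labels along a chain (given as a list of poset elements). -/
def labelsList {α Λ : Type} (lam : α → α → Λ) (l : List α) : List Λ :=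
  (l.zip l.tail).map fun p => lam p.1 p.2

/-- `l` is a maximal (saturated) chain of the interval `[x,y]` with respect to the
cover relation `cov`: it runs from `x` to `y` and every step is a cover. -/
def IsMaxChainList {α : Type} (cov : α → α → Prop) (x y : α) (l : List α) : Prop :=
  l.head? = some x ∧ l.getLast? = some y ∧ l.Chain' cov

/-- An `EL`-labeling of the poset whose cover relation is `cov`, with labels in the
linearly ordered set `(Λ, lle, llt)`: every interval has a unique rising maximal
chain, which moreover is lexicographically least among all maximal chains of the
interval. -/
def IsELLabeling (α Λ : Type) (lle llt : Λ → Λ → Prop)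
    (cov : α → α → Prop) (lam : α → α → Λ) : Prop :=
  ∀ x y : α, Relation.ReflTransGen cov x y →
    ∃ l : List α, (IsMaxChainList cov x y l ∧ (labelsList lam l).Chain' lle) ∧
      (∀ l' : List α, IsMaxChainList cov x y l' →
        (labelsList lam l').Chain' lle → l' = l) ∧
      (∀ l' : List α, IsMaxChainList cov x y l' →
        labelsList lam l = labelsList lam l' ∨
          List.Lex llt (labelsList lam l) (labelsList lam l'))

/-! ### Eulerian posets -/

/-- A graded poset is Eulerian if every nontrivial interval `[x,y]` has the
same number of elements of even rank as of odd rank. -/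
def IsEulerian (α : Type) [PartialOrder α] (rk : α → ℕ) : Prop :=
  ∀ x y : α, x < y →
    Set.ncard {z : α | x ≤ z ∧ z ≤ y ∧ Even (rk z)} =
      Set.ncard {z : α | x ≤ z ∧ z ≤ y ∧ ¬ Even (rk z)}

/-! ### The face lattice of the crosspolytope -/

/-- A face of the `n`-dimensional crosspolytope: a partial sign vector, i.e. the
pair `(S, ε)` of a subset `S ⊆ {1,…,n}` (the set of coordinates where the function
takes a value `some`) together with a sign function `ε` on `S`. -/
def CrossEl (n : ℕ) : Type := Fin n → Option Bool

/-- `(S,ε) ≤ (T,δ)` iff `S ⊆ T` and `δ` restricted to `S` is `ε`. -/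
instance (n : ℕ) : PartialOrder (CrossEl n) where
  le f g := ∀ i s, f i = some s → g i = some s
  le_refl f i s h := h
  le_trans f g h fg gh i s hi := gh i s (fg i s hi)
  le_antisymm f g fg gf := by
    funext i
    cases hf : f i with
    | some s => exact (fg i s hf).symm
    | none =>
      cases hg : g i with
      | some s => exact absurd (gf i s hg) (by simp [hf])
      | none => rfl

/-- The face lattice of the `n`-dimensional crosspolytope: all partial sign
vectors together with a new maximum element. -/
abbrev Cross (n : ℕ) : Type := WithTop (CrossEl n)

/-- The rank function of the face lattice of the crosspolytope:
`ρ(S,ε) = |S|` and the maximum has rank `n + 1`. -/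
def crossRk (n : ℕ) : Cross n → ℕ
  | none => n + 1
  | some f => (Finset.univ.filter fun i : Fin n => (f i).isSome).card

/-- The minimal element (the empty face) of the crosspolytope face lattice. -/
def crossBot (n : ℕ) : Cross n := WithTop.some (fun _ => none)

/-- The maximal element of the crosspolytope face lattice. -/
def crossTop (n : ℕ) : Cross n := ⊤

/-! ### Quasisymmetric functions -/

/-- The monomial quasisymmetric function `M_{(p₁,…,p_k)}`, as a formal power
series in the countably many commuting variables `t₁, t₂, …` (indexed by `ℕ`). -/
def MQ (R : Type) [CommRing R] (ps : List ℕ) : MvPowerSeries ℕ R :=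
  fun m => if ((m.support.sort (· ≤ ·)).map fun i => m i) = ps then 1 else 0

/-- The `t`-part of a monomial in the variables `s` (index `none`) and
`t₁, t₂, …` (indices `some i`). -/
def tpart (m : Option ℕ →₀ ℕ) : ℕ →₀ ℕ :=
  Finsupp.comapDomain some m (Option.some_injective ℕ).injOn

/-- The type B monomial quasisymmetric function `s^p · M_{(p₁,…,p_k)}`, a formal
power series in the variables `s` (index `none`) and `t₁, t₂, …` (indices `some i`). -/
def MB (R : Type) [CommRing R] (p : ℕ) (ps : List ℕ) : MvPowerSeries (Option ℕ) R :=
  fun m => if m none = p ∧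
      (((tpart m).support.sort (· ≤ ·)).map fun i => tpart m i) = ps then 1 else 0

/-- The quasisymmetric function `F(P)` of the graded poset with strict order
relation `lt`, rank function `rk`, minimum `b` and maximum `t`:
`F(P) = Σ_c M_{(ρ(x₀,x₁),…,ρ(x_{k-1},x_k))}` over all chains `c` from `b` to `t`. -/
def FQ (R : Type) [CommRing R] {α : Type} (lt : α → α → Prop) (rk : α → ℕ)
    (b t : α) : MvPowerSeries ℕ R :=
  ∑ᶠ (n : ℕ), ∑ᶠ (f : Fin (n + 1) → α)
    (_ : IsStrictChain lt f ∧ f 0 = b ∧ f (Fin.last n) = t),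
    MQ R (List.ofFn fun i : Fin n => rk (f i.succ) - rk (f i.castSucc))

/-- The type B quasisymmetric function `F_B(P) = Σ_{0̂ < x ≤ 1̂} s^{ρ(x)-1}·F([x,1̂])`,
written as a sum over all chains `0̂ < x₀ < x₁ < ⋯ < x_k = 1̂` of
`s^{ρ(x₀)-1}·M_{(ρ(x₀,x₁),…,ρ(x_{k-1},x_k))}`. -/
def FB (R : Type) [CommRing R] {α : Type} (lt : α → α → Prop) (rk : α → ℕ)
    (b t : α) : MvPowerSeries (Option ℕ) R :=
  ∑ᶠ (n : ℕ), ∑ᶠ (f : Fin (n + 1) → α)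
    (_ : IsStrictChain lt f ∧ lt b (f 0) ∧ f (Fin.last n) = t),
    MB R (rk (f 0) - 1) (List.ofFn fun i : Fin n => rk (f i.succ) - rk (f i.castSucc))

/-! ### Characters and the chain maps -/

/-- A character on `k⟨a,b⟩`: a linear functional which is multiplicative with
respect to Cartesian products of graded posets (of rank at least 1). -/
def IsCharacter (k : Type) [Field k] (G : AB k →ₗ[k] k) : Prop :=
  ∀ (α β : Type) [Fintype α] [Fintype β] [PartialOrder α] [PartialOrder β]
    [BoundedOrder α] [BoundedOrder β], ∀ (rkα : α → ℕ) (rkβ : β → ℕ),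
    IsRankFun α rkα → IsRankFun β rkβ → 1 ≤ rkα ⊤ → 1 ≤ rkβ ⊤ →
    G (PsiRel k (· < ·) (fun p : α × β => rkα p.1 + rkβ p.2)
        ((⊥ : α), (⊥ : β)) ((⊤ : α), (⊤ : β))) =
      G (PsiRel k (· < ·) rkα ⊥ ⊤) * G (PsiRel k (· < ·) rkβ ⊥ ⊤)

/-- The quasisymmetric function image `g̃F(P)` of the chain map of the second kind:
`Σ_c G(Ψ([x₀,x₁])) ⋯ G(Ψ([x_{k-1},x_k])) · M_{(ρ(x₀,x₁),…,ρ(x_{k-1},x_k))}`,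
summed over all chains `c = {b = x₀ < ⋯ < x_k = t}`. -/
def gtF (k : Type) [Field k] (G : AB k →ₗ[k] k) {α : Type} (lt : α → α → Prop)
    (rk : α → ℕ) (b t : α) : MvPowerSeries ℕ k :=
  ∑ᶠ (n : ℕ), ∑ᶠ (f : Fin (n + 1) → α)
    (_ : IsStrictChain lt f ∧ f 0 = b ∧ f (Fin.last n) = t),
    (∏ i : Fin n, G (PsiRel k lt rk (f i.castSucc) (f i.succ))) •
      MQ k (List.ofFn fun i : Fin n => rk (f i.succ) - rk (f i.castSucc))

/-- The type B quasisymmetric function image `gF_B(P) = Σ_{0̂ < x ≤ 1̂}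
s^{ρ(x)-1}·g̃F([x,1̂])` of the chain map of the first kind, written as a sum over
all chains `0̂ < x₀ < ⋯ < x_k = 1̂`. -/
def gFB (k : Type) [Field k] (G : AB k →ₗ[k] k) {α : Type} (lt : α → α → Prop)
    (rk : α → ℕ) (b t : α) : MvPowerSeries (Option ℕ) k :=
  ∑ᶠ (n : ℕ), ∑ᶠ (f : Fin (n + 1) → α)
    (_ : IsStrictChain lt f ∧ lt b (f 0) ∧ f (Fin.last n) = t),
    (∏ i : Fin n, G (PsiRel k lt rk (f i.castSucc) (f i.succ))) •
      MB k (rk (f 0) - 1) (List.ofFn fun i : Fin n => rk (f i.succ) - rk (f i.castSucc))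

/-- The space of homogeneous ab-polynomials of degree `n`. -/
def ABhomog (k : Type) [Field k] (n : ℕ) : Submodule k (AB k) :=
  Submodule.span k {x : AB k | ∃ w : List Bool, w.length = n ∧ x = word k w}

/-!
Put `e = a - b`. Both `κ` and `ν` commute with left multiplication by `e`, while `κ(b·u) = 0` and
`ν(b·u) = e·κ(u)`. Splitting the iterated coproducts at the first deleted letter, `T` is `κ` plus
the convolution of `u ↦ ν(u)·b` with `T`, whence
`T(e·u) = e·T(u)`, `T(b·u) = 2·b·T(u) + e·σ(u)`, `σ(e·u) = e·σ(u)`, `σ(b·u) = b·T(u)`.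
On monomials in `e` and `b`, `U` is therefore triangular with respect to the number of letters `b`,
with diagonal entry `2^(i+1)` at a monomial with `i` letters `b`. As these entries are distinct,
applying `∏_{j<i} (U - 2^(j+1))` to such a monomial and rescaling gives an eigenvector that differs
from it by terms with fewer letters `b`.
-/

section LinearAlgebra

open Finset Polynomial

section Filtration

variable {K V : Type*} [CommRing K] [AddCommGroup V] [Module K V]

theorem span_range_eq_of_sub_mem {ι : Type*} {v w : ι → V} (h : ι → ℕ)
    (hvw : ∀ i, v i - w i ∈ Submodule.span K (w '' {j | h j < h i})) :
    Submodule.span K (Set.range v) = Submodule.span K (Set.range w) := by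
  apply le_antisymm <;> rw [Submodule.span_le, Set.range_subset_iff]
  · intro i
    rw [← sub_add_cancel (v i) (w i)]
    exact add_mem (Submodule.span_mono (Set.image_subset_range _ _) (hvw i))
      (Submodule.subset_span ⟨i, rfl⟩)
  · intro i
    induction hi : h i using Nat.strong_induction_on generalizing i with
    | _ r ih =>
      subst hi
      have hlower : Submodule.span K (w '' {j | h j < h i}) ≤ Submodule.span K (Set.range v) :=
        Submodule.span_le.2 (Set.image_subset_iff.2 fun j hj => ih _ hj j rfl)
      rw [← sub_sub_cancel (v i) (w i)]
      exact sub_mem (Submodule.subset_span ⟨i, rfl⟩) (hlower (hvw i))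

theorem aeval_sub_eval_smul_mem {f : Module.End K V} {W : Submodule K V} (hW : W ≤ W.comap f)
    {c : K} {x : V} (hx : f x - c • x ∈ W) (p : K[X]) : aeval f p x - p.eval c • x ∈ W := by
  obtain ⟨q, hq⟩ := X_sub_C_dvd_sub_C_eval (a := c) (p := p)
  have hqx : aeval f p x - p.eval c • x = aeval f q (f x - c • x) := by
    simpa using congrArg (fun g => aeval f g x) (hq.trans (mul_comm _ _))
  rw [hqx]
  exact aeval_apply_smul_mem_of_le_comap hx q f hW

theorem aeval_prod_X_sub_C_apply_eq_zero {f : Module.End K V} {F : ℕ → Submodule K V} {μ : ℕ → K}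
    (hF₀ : F 0 = ⊥) (hf : ∀ r, ∀ x ∈ F (r + 1), f x - μ r • x ∈ F r) {r : ℕ} {x : V}
    (hx : x ∈ F r) : aeval f (∏ j ∈ range r, (X - C (μ j))) x = 0 := by
  induction r generalizing x with
  | zero => simpa [hF₀] using hx
  | succ r ih => simpa [prod_range_succ] using ih (hf r x hx)

theorem le_comap_of_filtration {f : Module.End K V} {F : ℕ → Submodule K V} {μ : ℕ → K}
    (hF₀ : F 0 = ⊥) (hF : Monotone F) (hf : ∀ r, ∀ x ∈ F (r + 1), f x - μ r • x ∈ F r) (r : ℕ) :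
    F r ≤ (F r).comap f := by
  intro x hx
  cases r with
  | zero => simp_all
  | succ r =>
    rw [Submodule.mem_comap, ← sub_add_cancel (f x) (μ r • x)]
    exact add_mem (hF r.le_succ (hf r x hx)) (Submodule.smul_mem _ _ hx)

end Filtration

theorem exists_eigenvector_sub_mem {K V : Type*} [Field K] [AddCommGroup V] [Module K V]
    {f : Module.End K V} {F : ℕ → Submodule K V} {μ : ℕ → K}
    (hF₀ : F 0 = ⊥) (hF : Monotone F) (hf : ∀ r, ∀ x ∈ F (r + 1), f x - μ r • x ∈ F r)
    {r : ℕ} (hμ : ∀ j < r, μ r ≠ μ j) {x : V} (hx : x ∈ F (r + 1)) :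
    ∃ v, f v = μ r • v ∧ v - x ∈ F r := by
  set p : K[X] := ∏ j ∈ range r, (X - C (μ j)) with hp
  have hpr : p.eval (μ r) ≠ 0 := by
    rw [hp, eval_prod, prod_ne_zero_iff]
    intro j hj
    simpa [sub_eq_zero] using hμ j (mem_range.1 hj)
  have hfp : f (aeval f p x) = μ r • aeval f p x := by
    have hvanish := aeval_prod_X_sub_C_apply_eq_zero hF₀ hf hx
    rw [prod_range_succ, mul_comm, ← hp] at hvanish
    simpa [sub_eq_zero] using hvanish
  refine ⟨(p.eval (μ r))⁻¹ • aeval f p x, by rw [map_smul, hfp, smul_comm], ?_⟩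
  have hpx : aeval f p x - p.eval (μ r) • x ∈ F r :=
    aeval_sub_eval_smul_mem (le_comap_of_filtration hF₀ hF hf r) (hf r x hx) p
  simpa [smul_sub, hpr] using (F r).smul_mem (p.eval (μ r))⁻¹ hpx

theorem exists_basis_eq_of_span_eq {K V ι : Type*} [Field K] [AddCommGroup V]
    [Module K V] [Fintype ι] {W : Submodule K V} {v : ι → V}
    (hspan : Submodule.span K (Set.range v) = W) (hcard : Module.finrank K W = Fintype.card ι) :
    ∃ bas : Module.Basis ι K W, ∀ i, (bas i : V) = v i := by
  subst hspan
  have hv : LinearIndependent K v := linearIndependent_iff_card_eq_finrank_span.2 hcard.symm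
  exact ⟨.span hv, fun i => congrArg Subtype.val (Module.Basis.span_apply hv i)⟩

open scoped Pointwise in
theorem span_range_pow {K A ι : Type*} [CommSemiring K] [Semiring A] [Algebra K A] (f : ι → A)
    (n : ℕ) :
    Submodule.span K (Set.range f) ^ n =
      Submodule.span K ((fun l : List ι => (l.map f).prod) '' {l | l.length = n}) := by
  rw [Submodule.span_pow]
  congr 1
  induction n with
  | zero => ext x; simp [List.length_eq_zero_iff]
  | succ n ih =>
    rw [pow_succ', ih]
    ext x
    simp only [Set.mem_mul, Set.mem_image, Set.mem_range, Set.mem_ofPred_eq]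
    constructor
    · rintro ⟨_, ⟨i, rfl⟩, _, ⟨l, hl, rfl⟩, rfl⟩
      exact ⟨i :: l, by simp [hl], by simp⟩
    · rintro ⟨_ | ⟨i, l⟩, hl, rfl⟩
      · simp at hl
      · exact ⟨_, ⟨i, rfl⟩, _, ⟨l, by simpa using hl, rfl⟩, by simp⟩

end LinearAlgebra

section Words

variable {R : Type} [CommRing R]

theorem onBasis_word {M : Type} [AddCommMonoid M] [Module R M] (f : List Bool → M)
    (l : List Bool) : onBasis R f (word R l) = f l := by
  have hl : MonoidAlgebra.coeffLinearEquiv R (word R l) =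
      Finsupp.single (FreeMonoid.ofList l) (1 : R) := rfl
  simp [onBasis, hl]

theorem ext_word {M : Type*} [AddCommMonoid M] [Module R M] {f g : AB R →ₗ[R] M}
    (h : ∀ l, f (word R l) = g (word R l)) : f = g :=
  (MonoidAlgebra.basis ABWord R).ext fun w => by
    simpa [word, MonoidAlgebra.basis_apply] using h (FreeMonoid.toList w)

theorem word_nil : word R [] = 1 := map_one _

theorem word_append (l m : List Bool) : word R (l ++ m) = word R l * word R m :=
  map_mul (MonoidAlgebra.of R ABWord) _ _

theorem word_cons (x : Bool) (l : List Bool) : word R (x :: l) = word R [x] * word R l :=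
  word_append [x] l

theorem word_eq_prod (l : List Bool) : word R l = (l.map fun x => word R [x]).prod := by
  induction l with
  | nil => exact word_nil
  | cons x l ih => rw [word_cons, ih, List.map_cons, List.prod_cons]

theorem linearIndependent_word : LinearIndependent R (word R) := by
  have h := (MonoidAlgebra.basis ABWord R).linearIndependent
  have hw : word R = MonoidAlgebra.basis ABWord R ∘ FreeMonoid.ofList := by
    funext l
    simp [word, MonoidAlgebra.basis_apply]
  rw [hw]
  exact h.comp _ FreeMonoid.ofList.injective

theorem av_eq_ev_add_bv : av R = ev R + bv R := (sub_add_cancel _ _).symm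

theorem Amap_av : Amap R (av R) = 1 := by simp [Amap, av, word]

theorem Amap_bv : Amap R (bv R) = 0 := by simp [Amap, bv, word]

theorem Amap_ev : Amap R (ev R) = 1 := by rw [ev, map_sub, Amap_av, Amap_bv, sub_zero]

theorem Hstar_mul_word (x : Bool) (u : AB R) : Hstar R (u * word R [x]) = u := by
  have h : Hstar R ∘ₗ LinearMap.mulRight R (word R [x]) = LinearMap.id :=
    ext_word fun l => by simp [← word_append, Hstar, onBasis_word]
  exact LinearMap.congr_fun h u

theorem Hstar_mul_bv (u : AB R) : Hstar R (u * bv R) = u := Hstar_mul_word false u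

theorem Hstar_mul_ev (u : AB R) : Hstar R (u * ev R) = 0 := by
  rw [ev, mul_sub, map_sub, av, bv, Hstar_mul_word, Hstar_mul_word, sub_self]

end Words

section Conv

open Finset

variable {R : Type} [CommRing R] {B : Type*} [Ring B] [Algebra R B]

/-- The convolution `u ↦ Σ_u φ(u₍₁₎)·ψ(u₍₂₎)` of two linear maps with respect to the coproduct. -/
def conv (φ ψ : AB R →ₗ[R] B) : AB R →ₗ[R] B :=
  LinearMap.mul' R B ∘ₗ TensorProduct.map φ ψ ∘ₗ Delta R

theorem conv_word (φ ψ : AB R →ₗ[R] B) (l : List Bool) :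
    conv φ ψ (word R l) =
      ∑ i ∈ range l.length, φ (word R (l.take i)) * ψ (word R (l.drop (i + 1))) := by
  simp [conv, Delta, onBasis_word]

theorem conv_one (φ ψ : AB R →ₗ[R] B) : conv φ ψ 1 = 0 := by
  simp [← word_nil, conv_word]

theorem conv_zero_left (ψ : AB R →ₗ[R] B) : conv 0 ψ = 0 := by
  simp [conv]

theorem conv_sub_left (φ₁ φ₂ ψ : AB R →ₗ[R] B) :
    conv (φ₁ - φ₂) ψ = conv φ₁ ψ - conv φ₂ ψ :=
  ext_word fun l => by simp [conv_word, sub_mul]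

theorem conv_mulLeft_comp (c : B) (φ ψ : AB R →ₗ[R] B) (u : AB R) :
    conv (LinearMap.mulLeft R c ∘ₗ φ) ψ u = c * conv φ ψ u := by
  have h : conv (LinearMap.mulLeft R c ∘ₗ φ) ψ = LinearMap.mulLeft R c ∘ₗ conv φ ψ :=
    ext_word fun l => by simp [conv_word, mul_assoc]
  exact LinearMap.congr_fun h u

theorem conv_word_mul (φ ψ : AB R →ₗ[R] B) (x : Bool) (u : AB R) :
    conv φ ψ (word R [x] * u) =
      φ 1 * ψ u + conv (φ ∘ₗ LinearMap.mulLeft R (word R [x])) ψ u := by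
  have h : conv φ ψ ∘ₗ LinearMap.mulLeft R (word R [x]) =
      LinearMap.mulLeft R (φ 1) ∘ₗ ψ + conv (φ ∘ₗ LinearMap.mulLeft R (word R [x])) ψ :=
    ext_word fun l => by
      simp [← word_cons, conv_word, sum_range_succ', word_nil, add_comm]
  exact LinearMap.congr_fun h u

theorem conv_bv_mul (φ ψ : AB R →ₗ[R] B) (u : AB R) :
    conv φ ψ (bv R * u) = φ 1 * ψ u + conv (φ ∘ₗ LinearMap.mulLeft R (bv R)) ψ u :=
  conv_word_mul φ ψ false u

theorem conv_ev_mul (φ ψ : AB R →ₗ[R] B) (u : AB R) :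
    conv φ ψ (ev R * u) = conv (φ ∘ₗ LinearMap.mulLeft R (ev R)) ψ u := by
  have h : φ ∘ₗ LinearMap.mulLeft R (ev R) =
      φ ∘ₗ LinearMap.mulLeft R (av R) - φ ∘ₗ LinearMap.mulLeft R (bv R) := by
    ext; simp [ev, sub_mul]
  rw [h, conv_sub_left, ev, sub_mul, map_sub, av, bv, conv_word_mul, conv_word_mul,
    add_sub_add_left_eq_sub, LinearMap.sub_apply]

end Conv

section Twist

variable {R : Type} [CommRing R]

/-- The linear map sending a homogeneous `u` to `φ(u)·(a-b)^(deg u)`; it is `κ` for `φ = A` and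
`ν` for `φ = C`. -/
def twist (φ : AB R →ₗ[R] R) : AB R →ₗ[R] AB R :=
  onBasis R fun w => φ (word R w) • ev R ^ w.length

theorem kappa_eq_twist : kappa R = twist (Amap R).toLinearMap := rfl

theorem nuMap_eq_twist : nuMap R = twist (Cmap R) := rfl

theorem twist_one (φ : AB R →ₗ[R] R) : twist φ 1 = algebraMap R (AB R) (φ 1) := by
  simp [← word_nil, twist, onBasis_word, Algebra.algebraMap_eq_smul_one]

theorem twist_word_mul (φ : AB R →ₗ[R] R) (x : Bool) (u : AB R) :
    twist φ (word R [x] * u) = ev R * twist (φ ∘ₗ LinearMap.mulLeft R (word R [x])) u := by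
  have h : twist φ ∘ₗ LinearMap.mulLeft R (word R [x]) =
      LinearMap.mulLeft R (ev R) ∘ₗ twist (φ ∘ₗ LinearMap.mulLeft R (word R [x])) :=
    ext_word fun l => by simp [← word_cons, twist, onBasis_word, pow_succ']
  exact LinearMap.congr_fun h u

theorem twist_bv_mul (φ : AB R →ₗ[R] R) (u : AB R) :
    twist φ (bv R * u) = ev R * twist (φ ∘ₗ LinearMap.mulLeft R (bv R)) u :=
  twist_word_mul φ false u

theorem twist_ev_mul (φ : AB R →ₗ[R] R) (u : AB R) :
    twist φ (ev R * u) = ev R * twist (φ ∘ₗ LinearMap.mulLeft R (ev R)) u := by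
  have h : twist (φ ∘ₗ LinearMap.mulLeft R (ev R)) =
      twist (φ ∘ₗ LinearMap.mulLeft R (av R)) - twist (φ ∘ₗ LinearMap.mulLeft R (bv R)) :=
    ext_word fun l => by simp [twist, onBasis_word, ev, sub_mul, sub_smul]
  rw [h, ev, sub_mul, map_sub, av, bv, twist_word_mul, twist_word_mul, LinearMap.sub_apply, mul_sub]
  rfl

theorem Amap_comp_mulLeft_ev :
    (Amap R).toLinearMap ∘ₗ LinearMap.mulLeft R (ev R) = (Amap R).toLinearMap := by
  ext; simp [Amap_ev]

theorem Amap_comp_mulLeft_bv :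
    (Amap R).toLinearMap ∘ₗ LinearMap.mulLeft R (bv R) = 0 := by
  ext; simp [Amap_bv]

theorem Cmap_eq (u : AB R) :
    Cmap R u = 2 * Amap R u + conv (Amap R).toLinearMap (Amap R).toLinearMap u := by
  simp [Cmap, conv]

theorem Cmap_comp_mulLeft_ev : Cmap R ∘ₗ LinearMap.mulLeft R (ev R) = Cmap R :=
  LinearMap.ext fun u => by
    simp [Cmap_eq, conv_ev_mul, Amap_comp_mulLeft_ev, Amap_ev]

theorem Cmap_comp_mulLeft_bv : Cmap R ∘ₗ LinearMap.mulLeft R (bv R) = (Amap R).toLinearMap :=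
  LinearMap.ext fun u => by
    simp [Cmap_eq, conv_bv_mul, Amap_comp_mulLeft_bv, Amap_bv, conv_zero_left]

theorem kappa_ev_mul (u : AB R) : kappa R (ev R * u) = ev R * kappa R u := by
  rw [kappa_eq_twist, twist_ev_mul, Amap_comp_mulLeft_ev]

theorem kappa_bv_mul (u : AB R) : kappa R (bv R * u) = 0 := by
  rw [kappa_eq_twist, twist_bv_mul, Amap_comp_mulLeft_bv]
  have h : twist (0 : AB R →ₗ[R] R) = 0 := ext_word fun l => by simp [twist, onBasis_word]
  rw [h, LinearMap.zero_apply, mul_zero]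

theorem kappa_one : kappa R 1 = 1 := by
  rw [kappa_eq_twist, twist_one, AlgHom.toLinearMap_apply, map_one, map_one]

theorem nuMap_ev_mul (u : AB R) : nuMap R (ev R * u) = ev R * nuMap R u := by
  rw [nuMap_eq_twist, twist_ev_mul, Cmap_comp_mulLeft_ev]

theorem nuMap_bv_mul (u : AB R) : nuMap R (bv R * u) = ev R * kappa R u := by
  rw [nuMap_eq_twist, twist_bv_mul, Cmap_comp_mulLeft_bv, kappa_eq_twist]

theorem nuMap_one : nuMap R 1 = 2 := by
  rw [nuMap_eq_twist, twist_one, Cmap_eq, conv_one, map_one, mul_one, add_zero, map_ofNat]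

end Twist

section Cuts

open Finset

theorem segments_ne_nil (l : List Bool) (c : List ℕ) : segments l c ≠ [] := by
  cases c <;> simp [segments]

theorem segments_cons_zero (x : Bool) (l : List Bool) (c : List ℕ) :
    segments (x :: l) (0 :: c.map Nat.succ) = [] :: segments l c := by
  simp [segments, Function.comp_def]

theorem segments_cons_map_succ (x : Bool) (l : List Bool) (c : List ℕ) :
    segments (x :: l) (c.map Nat.succ) = (segments l c).modifyHead (x :: ·) := by
  cases c <;> simp [segments, Function.comp_def]

theorem sum_finset_fin_succ {M : Type*} [AddCommMonoid M] {n : ℕ} (f : Finset (Fin (n + 1)) → M) :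
    ∑ S, f S = ∑ S : Finset (Fin n), f (S.map (Fin.succEmb n)) +
      ∑ S : Finset (Fin n), f (insert 0 (S.map (Fin.succEmb n))) := by
  have hpow : (univ.map ⟨Fin.succ, Fin.succ_injective n⟩).powerset =
      univ.map ⟨fun S : Finset (Fin n) => S.map (Fin.succEmb n), map_injective _⟩ := by
    ext S
    simp only [mem_powerset, subset_map_iff, mem_map, mem_univ, true_and, subset_univ]
    exact exists_congr fun _ => eq_comm
  rw [← powerset_univ, Fin.univ_succ, cons_eq_insert, sum_powerset_insert (by simp), hpow, sum_map,
    sum_map]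
  rfl

/-- The segments left when the letters of `w` at the positions in `S` are deleted; each choice of
`S` is one term of an iterated coproduct of `w`. -/
def cut (w : List Bool) (S : Finset (Fin w.length)) : List (List Bool) :=
  segments w ((S.sort (· ≤ ·)).map Fin.val)

theorem cut_ne_nil (w : List Bool) (S : Finset (Fin w.length)) : cut w S ≠ [] :=
  segments_ne_nil _ _

theorem map_val_sort_map_succ {n : ℕ} (S : Finset (Fin n)) :
    ((S.map (Fin.succEmb n)).sort (· ≤ ·)).map Fin.val =
      ((S.sort (· ≤ ·)).map Fin.val).map Nat.succ := by
  rw [← map_sort (Fin.succEmb n) S (· ≤ ·) (· ≤ ·) (by simp)]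
  simp [Function.comp_def]

theorem cut_cons_map_succ (x : Bool) (w : List Bool) (S : Finset (Fin w.length)) :
    cut (x :: w) (S.map (Fin.succEmb _)) = (cut w S).modifyHead (x :: ·) :=
  (congrArg (segments (x :: w)) (map_val_sort_map_succ S)).trans (segments_cons_map_succ x w _)

theorem cut_cons_insert_zero (x : Bool) (w : List Bool) (S : Finset (Fin w.length)) :
    cut (x :: w) (insert 0 (S.map (Fin.succEmb _))) = [] :: cut w S := by
  have hsort : ((insert 0 (S.map (Fin.succEmb _))).sort (· ≤ ·)).map Fin.val =
      0 :: ((S.sort (· ≤ ·)).map Fin.val).map Nat.succ := by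
    rw [sort_insert _ (by simp) (by simp), List.map_cons, map_val_sort_map_succ]
    rfl
  exact (congrArg (segments (x :: w)) hsort).trans (segments_cons_zero x w _)

/-- On the right, `i` is the position of the first deleted letter. -/
theorem sum_cut {M : Type*} [AddCommMonoid M] (w : List Bool) (F : List (List Bool) → M) :
    ∑ S, F (cut w S) = F [w] + ∑ i ∈ range w.length,
      ∑ S, F (w.take i :: cut (w.drop (i + 1)) S) := by
  induction w generalizing F with
  | nil =>
    have hcut (S : Finset (Fin 0)) : cut [] S = [[]] := by
      rw [eq_empty_of_isEmpty S]
      simp [cut, segments]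
    simp [hcut]
  | cons x w ih =>
    have hkeep := ih fun s => F (s.modifyHead (x :: ·))
    calc ∑ S, F (cut (x :: w) S)
        = ∑ S, F ((cut w S).modifyHead (x :: ·)) + ∑ S, F ([] :: cut w S) :=
          (sum_finset_fin_succ _).trans <| congrArg₂ _
            (sum_congr rfl fun S _ => congrArg F (cut_cons_map_succ x w S))
            (sum_congr rfl fun S _ => congrArg F (cut_cons_insert_zero x w S))
      _ = F [x :: w] + ∑ i ∈ range (w.length + 1),
            ∑ S, F ((x :: w).take i :: cut ((x :: w).drop (i + 1)) S) := by
          rw [hkeep, sum_range_succ', add_assoc]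
          rfl

end Cuts

section Recursion

open Finset

variable {R : Type} [CommRing R]

theorem chainProd_cons {s : List Bool} {rest : List (List Bool)} (h : rest ≠ []) :
    chainProd R (s :: rest) = nuMap R (word R s) * bv R * chainProd R rest := by
  cases rest with
  | nil => contradiction
  | cons => rfl

theorem Tmap_word (w : List Bool) : Tmap R (word R w) = ∑ S, chainProd R (cut w S) :=
  onBasis_word _ _

theorem Tmap_eq_kappa_add_conv :
    Tmap R = kappa R + conv (LinearMap.mulRight R (bv R) ∘ₗ nuMap R) (Tmap R) :=
  ext_word fun w => by
    rw [Tmap_word, sum_cut, LinearMap.add_apply, conv_word]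
    simp only [chainProd_cons (cut_ne_nil _ _), ← mul_sum, ← Tmap_word]
    rfl

theorem sigmaMap_eq_conv :
    sigmaMap R = conv (LinearMap.mulRight R (bv R) ∘ₗ kappa R) (Tmap R) := rfl

theorem Tmap_one : Tmap R 1 = 1 := by
  rw [Tmap_eq_kappa_add_conv, LinearMap.add_apply, kappa_one, conv_one, add_zero]

theorem sigmaMap_one : sigmaMap R 1 = 0 := conv_one _ _

theorem mulRight_bv_comp_kappa_comp_mulLeft_ev :
    (LinearMap.mulRight R (bv R) ∘ₗ kappa R) ∘ₗ LinearMap.mulLeft R (ev R) =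
      LinearMap.mulLeft R (ev R) ∘ₗ LinearMap.mulRight R (bv R) ∘ₗ kappa R :=
  LinearMap.ext fun u => by simp [kappa_ev_mul, mul_assoc]

theorem mulRight_bv_comp_kappa_comp_mulLeft_bv :
    (LinearMap.mulRight R (bv R) ∘ₗ kappa R) ∘ₗ LinearMap.mulLeft R (bv R) = 0 :=
  LinearMap.ext fun u => by simp [kappa_bv_mul]

theorem mulRight_bv_comp_nuMap_comp_mulLeft_ev :
    (LinearMap.mulRight R (bv R) ∘ₗ nuMap R) ∘ₗ LinearMap.mulLeft R (ev R) =
      LinearMap.mulLeft R (ev R) ∘ₗ LinearMap.mulRight R (bv R) ∘ₗ nuMap R :=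
  LinearMap.ext fun u => by simp [nuMap_ev_mul, mul_assoc]

theorem mulRight_bv_comp_nuMap_comp_mulLeft_bv :
    (LinearMap.mulRight R (bv R) ∘ₗ nuMap R) ∘ₗ LinearMap.mulLeft R (bv R) =
      LinearMap.mulLeft R (ev R) ∘ₗ LinearMap.mulRight R (bv R) ∘ₗ kappa R :=
  LinearMap.ext fun u => by simp [nuMap_bv_mul, mul_assoc]

theorem Tmap_ev_mul (u : AB R) : Tmap R (ev R * u) = ev R * Tmap R u := by
  conv_lhs => rw [Tmap_eq_kappa_add_conv]
  rw [LinearMap.add_apply, kappa_ev_mul, conv_ev_mul, mulRight_bv_comp_nuMap_comp_mulLeft_ev,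
    conv_mulLeft_comp, ← mul_add, ← LinearMap.add_apply, ← Tmap_eq_kappa_add_conv]

theorem Tmap_bv_mul (u : AB R) :
    Tmap R (bv R * u) = 2 * (bv R * Tmap R u) + ev R * sigmaMap R u := by
  conv_lhs => rw [Tmap_eq_kappa_add_conv]
  rw [LinearMap.add_apply, kappa_bv_mul, conv_bv_mul, mulRight_bv_comp_nuMap_comp_mulLeft_bv,
    conv_mulLeft_comp, ← sigmaMap_eq_conv, LinearMap.comp_apply, nuMap_one,
    LinearMap.mulRight_apply, zero_add, mul_assoc]

theorem sigmaMap_ev_mul (u : AB R) : sigmaMap R (ev R * u) = ev R * sigmaMap R u := by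
  rw [sigmaMap_eq_conv, conv_ev_mul, mulRight_bv_comp_kappa_comp_mulLeft_ev, conv_mulLeft_comp]

theorem sigmaMap_bv_mul (u : AB R) : sigmaMap R (bv R * u) = bv R * Tmap R u := by
  rw [sigmaMap_eq_conv, conv_bv_mul, mulRight_bv_comp_kappa_comp_mulLeft_bv, conv_zero_left,
    LinearMap.comp_apply, kappa_one, LinearMap.mulRight_apply, one_mul, LinearMap.zero_apply,
    add_zero]

end Recursion

section Triangular

variable {R : Type} [CommRing R]

variable (R) in
/-- The letters of the alphabet `{e, b}`, `e = a - b`, in which `U` is triangular; as in `word`,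
`false` stands for `b`. -/
def ebLetter (x : Bool) : AB R := if x then ev R else bv R

variable (R) in
/-- The monomial in `e = a - b` and `b` spelled by `l`. -/
def ebWord (l : List Bool) : AB R := (l.map (ebLetter R)).prod

theorem ebWord_nil : ebWord R [] = 1 := rfl

theorem ebWord_cons_true (l : List Bool) : ebWord R (true :: l) = ev R * ebWord R l := by
  simp [ebWord, ebLetter]

theorem ebWord_cons_false (l : List Bool) : ebWord R (false :: l) = bv R * ebWord R l := by
  simp [ebWord, ebLetter]

variable (R) in
/-- The span of the `eb`-monomials of degree `n` with fewer than `r` letters `b`; as `r` varies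
these form the filtration with respect to which `U` is triangular. -/
def ebSpan (n r : ℕ) : Submodule R (AB R) :=
  Submodule.span R (ebWord R '' {l | l.length = n ∧ l.count false < r})

theorem ebWord_mem_ebSpan {l : List Bool} {n r : ℕ} (hl : l.length = n) (hr : l.count false < r) :
    ebWord R l ∈ ebSpan R n r :=
  Submodule.subset_span ⟨l, ⟨hl, hr⟩, rfl⟩

theorem ebSpan_zero (n : ℕ) : ebSpan R n 0 = ⊥ := by simp [ebSpan]

theorem ebSpan_mono (n : ℕ) : Monotone (ebSpan R n) := fun _ _ hrs =>
  Submodule.span_mono <| Set.image_mono fun _ hl => ⟨hl.1, hl.2.trans_le hrs⟩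

theorem ev_mul_mem_ebSpan {n r : ℕ} {u : AB R} (hu : u ∈ ebSpan R n r) :
    ev R * u ∈ ebSpan R (n + 1) r := by
  suffices h : ebSpan R n r ≤ (ebSpan R (n + 1) r).comap (LinearMap.mulLeft R (ev R)) from h hu
  rw [ebSpan, Submodule.span_le]
  rintro _ ⟨l, ⟨hl, hr⟩, rfl⟩
  rw [SetLike.mem_coe, Submodule.mem_comap, LinearMap.mulLeft_apply, ← ebWord_cons_true]
  exact ebWord_mem_ebSpan (by simp [hl]) (by simpa using hr)

theorem bv_mul_mem_ebSpan {n r : ℕ} {u : AB R} (hu : u ∈ ebSpan R n r) :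
    bv R * u ∈ ebSpan R (n + 1) (r + 1) := by
  suffices h : ebSpan R n r ≤ (ebSpan R (n + 1) (r + 1)).comap (LinearMap.mulLeft R (bv R)) from
    h hu
  rw [ebSpan, Submodule.span_le]
  rintro _ ⟨l, ⟨hl, hr⟩, rfl⟩
  rw [SetLike.mem_coe, Submodule.mem_comap, LinearMap.mulLeft_apply, ← ebWord_cons_false]
  exact ebWord_mem_ebSpan (by simp [hl]) (by simpa using hr)

theorem Tmap_sigmaMap_ebWord_mul_ev (l : List Bool) :
    Tmap R (ebWord R l * ev R) = Tmap R (ebWord R l) * ev R ∧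
      sigmaMap R (ebWord R l * ev R) = sigmaMap R (ebWord R l) * ev R := by
  induction l with
  | nil =>
    have hT := Tmap_ev_mul (1 : AB R)
    have hσ := sigmaMap_ev_mul (1 : AB R)
    simp_all [ebWord_nil, Tmap_one, sigmaMap_one]
  | cons x l ih =>
    cases x
    · simp only [ebWord_cons_false, mul_assoc, Tmap_bv_mul, sigmaMap_bv_mul, ih.1, ih.2, add_mul,
        and_self]
    · simp only [ebWord_cons_true, mul_assoc, Tmap_ev_mul, sigmaMap_ev_mul, ih.1, ih.2, and_self]

theorem Tmap_sigmaMap_ebWord_mul_bv (l : List Bool) :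
    (∃ y ∈ ebSpan R l.length (l.count false), Tmap R (ebWord R l * bv R) =
      ((2 : R) ^ (l.count false + 1) • ebWord R l + y) * bv R) ∧
    ∃ z ∈ ebSpan R l.length (l.count false + 1), sigmaMap R (ebWord R l * bv R) = z * bv R := by
  induction l with
  | nil =>
    have hT := Tmap_bv_mul (1 : AB R)
    have hσ := sigmaMap_bv_mul (1 : AB R)
    simp only [mul_one, Tmap_one, sigmaMap_one, mul_zero, add_zero] at hT hσ
    refine ⟨⟨0, zero_mem _, ?_⟩, 1, ebWord_mem_ebSpan rfl (by simp), ?_⟩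
    · simp [ebWord_nil, hT, Algebra.smul_def, map_ofNat]
    · simp [ebWord_nil, hσ]
  | cons x l ih =>
    obtain ⟨⟨y, hy, hT⟩, z, hz, hσ⟩ := ih
    cases x
    · rw [ebWord_cons_false, mul_assoc, Tmap_bv_mul, sigmaMap_bv_mul, hT, hσ, List.length_cons,
        List.count_cons_self]
      have hw : ebWord R l ∈ ebSpan R l.length (l.count false + 1) :=
        ebWord_mem_ebSpan rfl (Nat.lt_succ_self _)
      refine ⟨⟨2 • (bv R * y) + ev R * z, ?_, ?_⟩,
        bv R * ((2 : R) ^ (l.count false + 1) • ebWord R l + y), ?_, (mul_assoc _ _ _).symm⟩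
      · exact add_mem (nsmul_mem (bv_mul_mem_ebSpan hy) 2) (ev_mul_mem_ebSpan hz)
      · rw [pow_succ' _ (_ + 1), mul_smul, two_smul R, two_mul, two_smul]
        simp only [mul_add, add_mul, mul_smul_comm, smul_mul_assoc, mul_assoc]
        abel
      · exact bv_mul_mem_ebSpan
          (add_mem (Submodule.smul_mem _ _ hw) (ebSpan_mono _ (Nat.le_succ _) hy))
    · rw [ebWord_cons_true, mul_assoc, Tmap_ev_mul, sigmaMap_ev_mul, hT, hσ, List.length_cons,
        List.count_cons_of_ne (by decide)]
      refine ⟨⟨ev R * y, ev_mul_mem_ebSpan hy, ?_⟩, ev R * z, ev_mul_mem_ebSpan hz,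
        (mul_assoc _ _ _).symm⟩
      rw [← mul_assoc, mul_add, mul_smul_comm]

theorem Umap_apply (u : AB R) : Umap R u = Hstar R (Tmap R (u * av R)) := rfl

theorem Umap_ebWord_sub_smul_mem_ebSpan (l : List Bool) :
    Umap R (ebWord R l) - (2 : R) ^ (l.count false + 1) • ebWord R l ∈
      ebSpan R l.length (l.count false) := by
  obtain ⟨⟨y, hy, hT⟩, -⟩ := Tmap_sigmaMap_ebWord_mul_bv (R := R) l
  rw [Umap_apply, av_eq_ev_add_bv, mul_add, map_add, map_add, (Tmap_sigmaMap_ebWord_mul_ev l).1,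
    Hstar_mul_ev, hT, Hstar_mul_bv, zero_add, add_sub_cancel_left]
  exact hy

theorem Umap_sub_smul_mem_ebSpan (n r : ℕ) {u : AB R} (hu : u ∈ ebSpan R n (r + 1)) :
    Umap R u - (2 : R) ^ (r + 1) • u ∈ ebSpan R n r := by
  suffices h : ebSpan R n (r + 1) ≤
      (ebSpan R n r).comap (Umap R - (2 : R) ^ (r + 1) • LinearMap.id) from h hu
  rw [ebSpan, Submodule.span_le]
  rintro _ ⟨l, ⟨rfl, hr⟩, rfl⟩
  have hl := Umap_ebWord_sub_smul_mem_ebSpan (R := R) l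
  rcases (Nat.lt_succ_iff.1 hr).lt_or_eq with hlt | rfl
  · have hU := add_mem (ebSpan_mono _ hlt.le hl)
      (Submodule.smul_mem _ ((2 : R) ^ (l.count false + 1)) (ebWord_mem_ebSpan rfl hlt))
    rw [sub_add_cancel] at hU
    exact sub_mem hU (Submodule.smul_mem _ _ (ebWord_mem_ebSpan rfl hlt))
  · exact hl

theorem span_range_word_singleton :
    Submodule.span R (Set.range fun x => word R [x]) =
      Submodule.span R (Set.range (ebLetter R)) := by
  apply le_antisymm <;> rw [Submodule.span_le, Set.range_subset_iff] <;> rintro (_ | _)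
  · exact Submodule.subset_span ⟨false, rfl⟩
  · change av R ∈ _
    rw [av_eq_ev_add_bv]
    exact add_mem (Submodule.subset_span ⟨true, rfl⟩) (Submodule.subset_span ⟨false, rfl⟩)
  · exact Submodule.subset_span ⟨false, rfl⟩
  · exact sub_mem (Submodule.subset_span ⟨true, rfl⟩) (Submodule.subset_span ⟨false, rfl⟩)

theorem ebSpan_succ_self (n : ℕ) :
    ebSpan R n (n + 1) = Submodule.span R (ebWord R '' {l | l.length = n}) := by
  rw [ebSpan]
  congr! 3
  ext l
  exact and_iff_left_of_imp fun hl : l.length = n => Nat.lt_succ_of_le (hl ▸ List.count_le_length)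

theorem ABhomog_eq_span_image_word {k : Type} [Field k] (n : ℕ) :
    ABhomog k n = Submodule.span k (word k '' {l | l.length = n}) := by
  rw [ABhomog]
  congr! 1
  ext x
  exact exists_congr fun w => and_congr_right fun _ => eq_comm

theorem ABhomog_eq_ebSpan {k : Type} [Field k] (n : ℕ) : ABhomog k n = ebSpan k n (n + 1) := by
  have hword : word k = fun l => (l.map fun x => word k [x]).prod := funext word_eq_prod
  rw [ABhomog_eq_span_image_word, hword, ← span_range_pow, span_range_word_singleton,
    span_range_pow, ebSpan_succ_self]
  rfl

end Triangular

section Spectrum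

open Finset

/-- The word of length `n` whose letters `b` stand at the positions in `S`. -/
def wordOf {n : ℕ} (S : Finset (Fin n)) : List Bool := List.ofFn fun i => decide (i ∉ S)

theorem wordOf_injective (n : ℕ) : Function.Injective (wordOf (n := n)) := fun S T h => by
  ext i
  simpa using congrFun (List.ofFn_injective h) i

theorem range_wordOf (n : ℕ) : Set.range (wordOf (n := n)) = {l | l.length = n} := by
  ext l
  refine ⟨?_, ?_⟩
  · rintro ⟨S, rfl⟩
    exact List.length_ofFn
  · rintro rfl
    exact ⟨univ.filter fun i => l[i] = false,
      List.ext_getElem (by simp [wordOf]) (by simp [wordOf])⟩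

theorem length_wordOf {n : ℕ} (S : Finset (Fin n)) : (wordOf S).length = n := List.length_ofFn

theorem count_wordOf {n : ℕ} (S : Finset (Fin n)) : (wordOf S).count false = S.card := by
  rw [wordOf, List.count, List.countP_eq_length_filter, List.ofFn_eq_map, List.filter_map,
    List.length_map, ← List.toFinset_card_of_nodup ((List.nodup_finRange n).filter _)]
  congr 1
  ext i
  simp

theorem ebSpan_eq_span_image_wordOf {R : Type} [CommRing R] (n r : ℕ) :
    ebSpan R n r = Submodule.span R ((ebWord R ∘ wordOf) '' {S : Finset (Fin n) | S.card < r}) := by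
  have hset : {l : List Bool | l.length = n ∧ l.count false < r} =
      wordOf '' {S : Finset (Fin n) | S.card < r} := by
    have hcard : {S : Finset (Fin n) | S.card < r} = wordOf ⁻¹' {l | l.count false < r} :=
      Set.ext fun S => by simp [count_wordOf]
    rw [hcard, Set.image_preimage_eq_inter_range, range_wordOf, Set.inter_comm]
    rfl
  rw [ebSpan, hset, Set.image_comp]

variable {k : Type} [Field k]

theorem finrank_ABhomog (n : ℕ) :
    Module.finrank k (ABhomog k n) = Fintype.card (Finset (Fin n)) := by
  rw [ABhomog_eq_span_image_word, ← range_wordOf, ← Set.range_comp,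
    finrank_span_eq_card (linearIndependent_word.comp _ (wordOf_injective n))]

theorem exists_Umap_eigenvector {n r : ℕ}
    (hpow : Set.InjOn (fun i : ℕ => (2 : k) ^ (i + 1)) (Set.Iic n)) {u : AB k}
    (hr : r ≤ n) (hu : u ∈ ebSpan k n (r + 1)) :
    ∃ v, Umap k v = (2 : k) ^ (r + 1) • v ∧ v - u ∈ ebSpan k n r :=
  exists_eigenvector_sub_mem (ebSpan_zero n) (ebSpan_mono n)
    (fun r _ => Umap_sub_smul_mem_ebSpan n r)
    (fun _ hj heq => hj.ne' (hpow hr (hj.le.trans hr) heq)) hu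

theorem U_spectrum_general (k : Type) [Field k] (n : ℕ)
    (hpow : Set.InjOn (fun i : ℕ => (2 : k) ^ (i + 1)) (Set.Iic n)) :
    ∃ bas : Module.Basis (Finset (Fin n)) k (ABhomog k n),
      ∀ S : Finset (Fin n),
        Umap k ((bas S : AB k)) = ((2 : k) ^ (S.card + 1)) • (bas S : AB k) := by
  have heigen (S : Finset (Fin n)) : ∃ v, Umap k v = (2 : k) ^ (S.card + 1) • v ∧
      v - ebWord k (wordOf S) ∈ ebSpan k n S.card :=
    exists_Umap_eigenvector hpow (card_finset_fin_le S)
      (ebWord_mem_ebSpan (length_wordOf S) (by simp [count_wordOf]))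
  choose v hv hvw using heigen
  have hspan : Submodule.span k (Set.range v) = ABhomog k n := by
    simp only [ebSpan_eq_span_image_wordOf] at hvw
    rw [span_range_eq_of_sub_mem Finset.card hvw, Set.range_comp, range_wordOf,
      ← ebSpan_succ_self, ABhomog_eq_ebSpan]
  obtain ⟨bas, hbas⟩ := exists_basis_eq_of_span_eq hspan (finrank_ABhomog n)
  exact ⟨bas, fun S => by rw [hbas, hv]⟩

theorem two_pow_succ_injective (k : Type*) [Semiring k] [CharZero k] :
    Function.Injective fun i : ℕ => (2 : k) ^ (i + 1) :=
  fun i j (h : (2 : k) ^ (i + 1) = 2 ^ (j + 1)) =>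
    Nat.succ_injective (Nat.pow_right_injective le_rfl (by exact_mod_cast h))

end Spectrum

theorem U_spectrum (k : Type) [Field k] [CharZero k] (n : ℕ) :
    ∃ bas : Module.Basis (Finset (Fin n)) k (ABhomog k n),
      ∀ S : Finset (Fin n),
        Umap k ((bas S : AB k)) = ((2 : k) ^ (S.card + 1)) • (bas S : AB k) :=
  U_spectrum_general k n (two_pow_succ_injective k).injOn

end Tcheb
end
end

section
/- Let G be a character on k⟨a,b⟩. Then for all graded posets P and Q of rank at least 1, the type B power series gF_B satisfies gF_B(P ◇ Q) = gF_B(P) · gF_B(Q); that is, the chain map of the first kind is an algebra homomorphism on type B quasisymmetric functions of posets with respect to the diamond product. -/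
open scoped TensorProduct

noncomputable section

namespace Tcheb

/-!
Fix a monomial `m` in `s, t₁, …, t_N`. A strict chain `x₀ < ⋯ < xₙ` of `P ∖ {0̂}` contributing to
the coefficient of `m` can be padded with trivial steps, of weight `1`, at the variables missing
from `m`, and so becomes a multichain with `N` steps whose `i`-th step has rank the exponent of
`tᵢ`. Hence, up to monomials in further variables, `gF_B(P)` is the generating function of the
multichains `x₀ ≤ ⋯ ≤ x_N = 1̂` of `P ∖ {0̂}`, each step weighted by `G(Ψ([x, y]))`. Multichains of
`(P ∖ {0̂}) × (Q ∖ {0̂})` are pairs of multichains; their exponents add because `ρ - 1` is additive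
for the diamond product, and their weights multiply because `G` is a character.
-/

section RankFunctions

theorem ordConnected_range_subtype {α : Type*} [Preorder α] {p : α → Prop}
    (hp : {x | p x}.OrdConnected) :
    (Set.range (OrderEmbedding.subtype p)).OrdConnected := by
  rwa [← Subtype.range_coe_subtype] at hp

variable {α : Type} [PartialOrder α] {ρ : α → ℕ}

theorem strictMono_of_covBy_eq_add_one [LocallyFiniteOrder α]
    (hρ : ∀ x y, x ⋖ y → ρ y = ρ x + 1) : StrictMono ρ :=
  (strictMono_iff_forall_covBy ρ).2 fun x y hxy => hρ x y hxy ▸ Nat.lt_succ_self _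

theorem isRankFun_Icc [LocallyFiniteOrder α] (hρ : ∀ x y, x ⋖ y → ρ y = ρ x + 1) (x y : α)
    [Fact (x ≤ y)] : IsRankFun (Set.Icc x y) fun z => ρ z - ρ x := by
  refine ⟨Nat.sub_self _, fun a c hac => ?_⟩
  have hcov : (a : α) ⋖ c := (Set.OrdConnected.apply_covBy_apply_iff
    (OrderEmbedding.subtype _) (ordConnected_range_subtype Set.ordConnected_Icc)).2 hac
  have hxa := (strictMono_of_covBy_eq_add_one hρ).monotone a.2.1
  dsimp only
  rw [hρ _ _ hcov, Nat.sub_add_comm hxa]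

end RankFunctions

section StrictChains

variable {A B : Type} [PartialOrder A] [PartialOrder B]

theorem finsum_isStrictChain_comp {M : Type*} [AddCommMonoid M] (ι : A ↪o B) {n : ℕ}
    (p : (Fin (n + 1) → B) → Prop)
    (hp : ∀ f, IsStrictChain (· < ·) f → p f → ∀ i, f i ∈ Set.range ι)
    (F : (Fin (n + 1) → B) → M) :
    ∑ᶠ (f : Fin (n + 1) → A) (_ : IsStrictChain (· < ·) f ∧ p (ι ∘ f)), F (ι ∘ f) =
      ∑ᶠ (f : Fin (n + 1) → B) (_ : IsStrictChain (· < ·) f ∧ p f), F f := by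
  have hchain (f : Fin (n + 1) → A) :
      IsStrictChain (· < ·) (ι ∘ f) ↔ IsStrictChain (· < ·) f := by simp [IsStrictChain]
  refine finsum_mem_eq_of_bijOn
    (s := {f : Fin (n + 1) → A | IsStrictChain (· < ·) f ∧ p (ι ∘ f)})
    (t := {f : Fin (n + 1) → B | IsStrictChain (· < ·) f ∧ p f}) (ι ∘ ·)
    ⟨fun f hf => ⟨(hchain f).2 hf.1, hf.2⟩, ι.injective.comp_left.injOn, fun f hf => ?_⟩
    fun _ _ => rfl
  choose g hg using hp f hf.1 hf.2
  obtain rfl : ι ∘ g = f := funext hg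
  exact ⟨g, ⟨(hchain g).1 hf.1, hf.2⟩, rfl⟩

variable {k : Type} [CommRing k]

theorem PsiRel_comp (ι : A ↪o B) (hι : (Set.range ι).OrdConnected) {rA : A → ℕ} {rB : B → ℕ}
    (hr : ∀ x y, rB (ι y) - rB (ι x) = rA y - rA x) (b t : A) :
    PsiRel k (· < ·) rB (ι b) (ι t) = PsiRel k (· < ·) rA b t := by
  unfold PsiRel
  refine finsum_congr fun n => ?_
  rw [← finsum_isStrictChain_comp ι (fun f => f 0 = ι b ∧ f (Fin.last n) = ι t)]
  · simp [chainWt, hr]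
  · rintro f hf ⟨hb, ht⟩ i
    have hmono : Monotone f := StrictMono.monotone hf
    exact hι.out ⟨b, rfl⟩ ⟨t, rfl⟩ ⟨hb ▸ hmono i.zero_le, ht ▸ hmono i.le_last⟩

theorem PsiRel_Icc {ρ : A → ℕ} (hρ : Monotone ρ) (x y : A) [Fact (x ≤ y)] :
    PsiRel k (· < ·) (fun z : Set.Icc x y => ρ z - ρ x) ⊥ ⊤ = PsiRel k (· < ·) ρ x y :=
  (PsiRel_comp (OrderEmbedding.subtype (· ∈ Set.Icc x y))
    (ordConnected_range_subtype Set.ordConnected_Icc)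
    (fun u _ => (Nat.sub_sub_sub_cancel_right (hρ u.2.1)).symm) ⊥ ⊤).symm

end StrictChains

section IncidenceFunction

variable {k : Type} [CommRing k] (G : AB k →ₗ[k] k) {A B : Type} [PartialOrder A] [PartialOrder B]

open Classical in
/-- The function `[x, y] ↦ G(Ψ([x, y]))` of the incidence algebra, with the value `1` (not given by
`G`, as one-element posets have no ab-index) on the intervals `[x, x]`. -/
def psiIncidence (ρ : A → ℕ) : IncidenceAlgebra k A where
  toFun x y := if x = y then 1 else if x < y then G (PsiRel k (· < ·) ρ x y) else 0
  eq_zero_of_not_le' x y h := by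
    rw [if_neg fun e => h e.le, if_neg fun e => h e.le]

@[simp]
theorem psiIncidence_self (ρ : A → ℕ) (x : A) : psiIncidence G ρ x x = 1 :=
  if_pos rfl

theorem psiIncidence_of_lt (ρ : A → ℕ) {x y : A} (h : x < y) :
    psiIncidence G ρ x y = G (PsiRel k (· < ·) ρ x y) :=
  (if_neg h.ne).trans (if_pos h)

theorem psiIncidence_comp (ι : A ↪o B) (hι : (Set.range ι).OrdConnected) {rA : A → ℕ}
    {rB : B → ℕ} (hr : ∀ x y, rB (ι y) - rB (ι x) = rA y - rA x) (x y : A) :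
    psiIncidence G rB (ι x) (ι y) = psiIncidence G rA x y := by
  simp only [psiIncidence, IncidenceAlgebra.coe_mk, PsiRel_comp ι hι hr]
  congr 1
  · exact propext ι.eq_iff_eq
  · congr 1
    exact propext ι.lt_iff_lt

end IncidenceFunction

section Product

variable {k : Type} {A B : Type} [PartialOrder A] [PartialOrder B]

theorem psiIncidence_prod_mk_left [CommRing k] (G : AB k →ₗ[k] k) (ρ : A → ℕ) (σ : B → ℕ)
    (x : A) (y z : B) :
    psiIncidence G (fun p : A × B => ρ p.1 + σ p.2) (x, y) (x, z) = psiIncidence G σ y z := by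
  refine psiIncidence_comp G (OrderEmbedding.ofMapLEIff (fun w => (x, w)) (by simp)) ⟨?_⟩
    (fun _ _ => Nat.add_sub_add_left _ _ _) y z
  rintro _ ⟨u, rfl⟩ _ ⟨v, rfl⟩ w ⟨hu, hv⟩
  exact ⟨w.2, Prod.ext (le_antisymm hu.1 hv.1) rfl⟩

theorem psiIncidence_prod_mk_right [CommRing k] (G : AB k →ₗ[k] k) (ρ : A → ℕ) (σ : B → ℕ)
    (x y : A) (z : B) :
    psiIncidence G (fun p : A × B => ρ p.1 + σ p.2) (x, z) (y, z) = psiIncidence G ρ x y := by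
  refine psiIncidence_comp G (OrderEmbedding.ofMapLEIff (fun w => (w, z)) (by simp)) ⟨?_⟩
    (fun _ _ => Nat.add_sub_add_right _ _ _) x y
  rintro _ ⟨u, rfl⟩ _ ⟨v, rfl⟩ w ⟨hu, hv⟩
  exact ⟨w.1, Prod.ext rfl (le_antisymm hu.2 hv.2)⟩

theorem PsiRel_Icc_prod [CommRing k] {ρ : A → ℕ} {σ : B → ℕ} (hρ : Monotone ρ) (hσ : Monotone σ)
    (x y : A) (x' y' : B) [Fact (x ≤ y)] [Fact (x' ≤ y')] :
    PsiRel k (· < ·) (fun p : Set.Icc x y × Set.Icc x' y' => (ρ p.1 - ρ x) + (σ p.2 - σ x'))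
        (⊥, ⊥) (⊤, ⊤) =
      PsiRel k (· < ·) (fun p : A × B => ρ p.1 + σ p.2) (x, x') (y, y') := by
  let ι : Set.Icc x y × Set.Icc x' y' ↪o A × B :=
    OrderEmbedding.ofMapLEIff (Prod.map Subtype.val Subtype.val) fun _ _ => Iff.rfl
  refine (PsiRel_comp ι ?_ (fun u v => ?_) (⊥, ⊥) (⊤, ⊤)).symm
  · have hrange : Set.range ι = Set.Icc (x, x') (y, y') := by
      simp only [ι, OrderEmbedding.coe_ofMapLEIff, Set.range_prodMap, Subtype.range_coe,
        Set.Icc_prod_Icc]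
    exact hrange ▸ Set.ordConnected_Icc
  · have := hρ u.1.2.1
    have := hρ v.1.2.1
    have := hσ u.2.2.1
    have := hσ v.2.2.1
    simp only [ι, OrderEmbedding.coe_ofMapLEIff, Prod.map_fst, Prod.map_snd]
    omega

theorem IsCharacter.psiIncidence_prod [Field k] {G : AB k →ₗ[k] k} (hG : IsCharacter k G)
    [LocallyFiniteOrder A] [LocallyFiniteOrder B] {ρ : A → ℕ} {σ : B → ℕ}
    (hρ : ∀ x y, x ⋖ y → ρ y = ρ x + 1) (hσ : ∀ x y, x ⋖ y → σ y = σ x + 1) :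
    psiIncidence G (fun p : A × B => ρ p.1 + σ p.2) =
      (psiIncidence G ρ).prod (psiIncidence G σ) := by
  have hρ' := strictMono_of_covBy_eq_add_one hρ
  have hσ' := strictMono_of_covBy_eq_add_one hσ
  ext ⟨x, x'⟩ ⟨y, y'⟩ ⟨hxy, hxy'⟩
  dsimp only at hxy hxy'
  rw [IncidenceAlgebra.prod_mk]
  obtain rfl | hlt := hxy.eq_or_lt
  · rw [psiIncidence_prod_mk_left, psiIncidence_self, one_mul]
  obtain rfl | hlt' := hxy'.eq_or_lt
  · rw [psiIncidence_prod_mk_right, psiIncidence_self, mul_one]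
  have := Fact.mk hxy
  have := Fact.mk hxy'
  have hmul := hG (Set.Icc x y) (Set.Icc x' y') _ _ (isRankFun_Icc hρ x y)
    (isRankFun_Icc hσ x' y') (Nat.sub_pos_of_lt (hρ' hlt)) (Nat.sub_pos_of_lt (hσ' hlt'))
  rw [PsiRel_Icc_prod hρ'.monotone hσ'.monotone, PsiRel_Icc hρ'.monotone,
    PsiRel_Icc hσ'.monotone] at hmul
  rwa [psiIncidence_of_lt G _ (Prod.mk_lt_mk.2 (Or.inl ⟨hlt, hxy'⟩)), psiIncidence_of_lt G _ hlt,
    psiIncidence_of_lt G _ hlt']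

end Product

section ChainSeries

variable {k : Type} {A B : Type} [PartialOrder A] [PartialOrder B]

/-- The type B generating function of the strict chains `x₀ < ⋯ < xₙ = t`, weighted by the product
of the values of `φ` on their steps; the `s`-exponent of a chain is `ρ x₀`. -/
def chainSeries [CommRing k] (ρ : A → ℕ) (φ : IncidenceAlgebra k A) (t : A) :
    MvPowerSeries (Option ℕ) k :=
  ∑ᶠ (n : ℕ), ∑ᶠ (f : Fin (n + 1) → A) (_ : IsStrictChain (· < ·) f ∧ f (Fin.last n) = t),
    (∏ i : Fin n, φ (f i.castSucc) (f i.succ)) •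
      MB k (ρ (f 0)) (List.ofFn fun i : Fin n => ρ (f i.succ) - ρ (f i.castSucc))

theorem gFB_eq_chainSeries [Field k] (G : AB k →ₗ[k] k) (ι : A ↪o B) {b : B}
    (hι : Set.range ι = Set.Ioi b) {rk : B → ℕ} {ρ : A → ℕ} (hρ : ∀ a, rk (ι a) = ρ a + 1)
    (t : A) : gFB k G (· < ·) rk b (ι t) = chainSeries ρ (psiIncidence G ρ) t := by
  have hr (x y : A) : rk (ι y) - rk (ι x) = ρ y - ρ x := by
    rw [hρ, hρ, Nat.add_sub_add_right]
  refine finsum_congr fun n => ?_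
  rw [← finsum_isStrictChain_comp ι (fun f => b < f 0 ∧ f (Fin.last n) = ι t)]
  · refine finsum_congr fun f => finsum_congr_Prop ?_ fun hf => ?_
    · have hb : b < ι (f 0) := hι.subset ⟨f 0, rfl⟩
      simp [hb]
    · simp only [Function.comp_apply, hr]
      rw [hρ, Nat.add_sub_cancel]
      congr 1
      refine Finset.prod_congr rfl fun i _ => ?_
      rw [PsiRel_comp ι (hι ▸ Set.ordConnected_Ioi) hr,
        psiIncidence_of_lt G ρ (hf.1 _ _ Fin.castSucc_lt_succ)]
  · rintro f hf ⟨hb, -⟩ i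
    exact hι.superset (hb.trans_le (StrictMono.monotone hf i.zero_le))

end ChainSeries

section Exponents

/-- The nonzero `t`-exponents of a monomial, in the order of the variables: the coefficient of `m`
in `MB R p ps` is `1` or `0` according to whether `m none = p ∧ tExponents m = ps`. -/
def tExponents (m : Option ℕ →₀ ℕ) : List ℕ :=
  ((tpart m).support.sort (· ≤ ·)).map (tpart m)

theorem ne_zero_of_mem_tExponents {m : Option ℕ →₀ ℕ} {p : ℕ} (hp : p ∈ tExponents m) : p ≠ 0 := by
  obtain ⟨i, hi, rfl⟩ := List.mem_map.1 hp
  exact Finsupp.mem_support_iff.1 ((Finset.mem_sort _).1 hi)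

theorem prod_map_filter {α M : Type*} [Monoid M] {f : α → M} {p : α → Bool}
    (hf : ∀ a, p a = false → f a = 1) (l : List α) :
    ((l.filter p).map f).prod = (l.map f).prod := by
  induction l with
  | nil => rfl
  | cons a l ih => cases hpa : p a <;> simp [hpa, hf, ih]

theorem sort_support_tpart {m : Option ℕ →₀ ℕ} {N : ℕ} (hN : ∀ i, N ≤ i → m (some i) = 0) :
    (tpart m).support.sort (· ≤ ·) = (List.range N).filter (tpart m · ≠ 0) := by
  refine (Finset.sortedLT_sort _).pairwise.eq_of_mem_iff (List.pairwise_lt_range.filter _)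
    fun i => ?_
  have : tpart m i ≠ 0 → i < N := fun h => lt_of_not_ge fun hi => h (hN i hi)
  simpa using this

theorem prod_map_tExponents {M : Type*} [Monoid M] {K : ℕ → M} (hK : K 0 = 1)
    {m : Option ℕ →₀ ℕ} {N : ℕ} (hN : ∀ i, N ≤ i → m (some i) = 0) :
    ((tExponents m).map K).prod = (List.ofFn fun i : Fin N => K (m (some i))).prod := by
  rw [tExponents, sort_support_tpart hN, List.map_map, prod_map_filter (by simp +contextual [hK]),
    List.ofFn_eq_map, ← List.map_coe_finRange_eq_range, List.map_map]
  rfl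

end Exponents

section TransferMatrix

open scoped Matrix

theorem vecMul_prod_ofFn {k A : Type*} [CommSemiring k] [Fintype A] [DecidableEq A] {n : ℕ}
    (v : A → k) (M : Fin n → Matrix A A k) (t : A) :
    (v ᵥ* (List.ofFn M).prod) t =
      ∑ f : Fin (n + 1) → A with f (Fin.last n) = t,
        v (f 0) * ∏ i, M i (f i.castSucc) (f i.succ) := by
  rw [Finset.sum_filter]
  induction n generalizing v with
  | zero =>
    rw [← Equiv.sum_comp (M := k) (Equiv.funUnique (Fin 1) A).symm]
    simp
  | succ n ih =>
    rw [List.ofFn_succ, List.prod_cons, ← Matrix.vecMul_vecMul, ih,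
      ← (Fin.consEquiv fun _ : Fin (n + 2) => A).sum_comp, Fintype.sum_prod_type, Finset.sum_comm]
    refine Finset.sum_congr rfl fun g _ => ?_
    simp [Fin.prod_univ_succ, ← Fin.succ_last, Matrix.vecMul, dotProduct, Finset.sum_mul, mul_assoc,
      Finset.sum_ite_irrel]

variable {k A : Type*} [CommRing k] [PartialOrder A]

theorem prod_eq_zero_of_not_monotone (φ : IncidenceAlgebra k A) {n : ℕ} {f : Fin (n + 1) → A}
    (hf : ¬ Monotone f) : ∏ i : Fin n, φ (f i.castSucc) (f i.succ) = 0 := by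
  rw [Fin.monotone_iff_le_succ, not_forall] at hf
  obtain ⟨i, hi⟩ := hf
  exact Finset.prod_eq_zero (Finset.mem_univ i) (IncidenceAlgebra.apply_eq_zero_of_not_le hi φ)

theorem prod_eq_zero_of_not_strictMono {ρ : A → ℕ} (φ : IncidenceAlgebra k A) {n : ℕ}
    {f : Fin (n + 1) → A} (hρf : ∀ i : Fin n, ρ (f i.succ) - ρ (f i.castSucc) ≠ 0)
    (hf : ¬ StrictMono f) : ∏ i : Fin n, φ (f i.castSucc) (f i.succ) = 0 := by
  refine prod_eq_zero_of_not_monotone φ fun hmono => hf (Fin.strictMono_iff_lt_succ.2 fun i => ?_)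
  refine (hmono Fin.castSucc_lt_succ.le).lt_of_ne fun heq => hρf i ?_
  rw [heq, Nat.sub_self]

/-- The transfer matrix of the steps `x ≤ y` with `ρ y - ρ x = p`, weighted by `φ`. -/
def rankStep (ρ : A → ℕ) (φ : IncidenceAlgebra k A) (p : ℕ) : Matrix A A k :=
  fun x y => if ρ y - ρ x = p then φ x y else 0

theorem rankStep_zero [DecidableEq A] {ρ : A → ℕ} (hρ : StrictMono ρ) {φ : IncidenceAlgebra k A}
    (hφ : ∀ x, φ x x = 1) : rankStep ρ φ 0 = 1 := by
  ext x y
  rw [rankStep]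
  obtain rfl | hne := eq_or_ne x y
  · rw [Nat.sub_self, if_pos rfl, hφ, Matrix.one_apply_eq]
  rw [Matrix.one_apply_ne hne, ite_eq_right_iff]
  refine fun h => IncidenceAlgebra.apply_eq_zero_of_not_le (fun hle => ?_) φ
  exact (Nat.sub_pos_of_lt (hρ (hle.lt_of_ne hne))).ne' h

theorem prod_rankStep (ρ : A → ℕ) (φ : IncidenceAlgebra k A) {n : ℕ} (p : Fin n → ℕ)
    (f : Fin (n + 1) → A) :
    ∏ i, rankStep ρ φ (p i) (f i.castSucc) (f i.succ) =
      if ∀ i, ρ (f i.succ) - ρ (f i.castSucc) = p i then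
        ∏ i : Fin n, φ (f i.castSucc) (f i.succ) else 0 := by
  simp only [rankStep, Finset.prod_ite_zero, Finset.mem_univ, forall_const]

end TransferMatrix

section Coefficients

open scoped Matrix

variable {k : Type} [CommRing k] {A : Type} [PartialOrder A]

open Classical in
theorem chainSeries_eq_finsum_sum [Fintype A] (ρ : A → ℕ) (φ : IncidenceAlgebra k A) (t : A) :
    chainSeries ρ φ t = ∑ᶠ n, ∑ f : Fin (n + 1) → A with StrictMono f ∧ f (Fin.last n) = t,
      (∏ i : Fin n, φ (f i.castSucc) (f i.succ)) •
        MB k (ρ (f 0)) (List.ofFn fun i : Fin n => ρ (f i.succ) - ρ (f i.castSucc)) := by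
  refine finsum_congr fun n => ?_
  rw [← finsum_mem_coe_finset]
  simp only [Finset.coe_filter, Finset.mem_univ, true_and, Set.mem_ofPred_eq]
  rfl

open Classical in
theorem coeff_chainSeries_eq_finsum [Fintype A] (ρ : A → ℕ) (φ : IncidenceAlgebra k A) (t : A)
    (m : Option ℕ →₀ ℕ) :
    MvPowerSeries.coeff m (chainSeries ρ φ t) =
      ∑ᶠ n, ∑ f : Fin (n + 1) → A with StrictMono f ∧ f (Fin.last n) = t,
        if m none = ρ (f 0) ∧
            tExponents m = List.ofFn fun i : Fin n => ρ (f i.succ) - ρ (f i.castSucc) then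
          ∏ i : Fin n, φ (f i.castSucc) (f i.succ) else 0 := by
  rw [chainSeries_eq_finsum_sum]
  refine ((MvPowerSeries.coeff m).toAddMonoidHom.map_finsum ?_).trans (finsum_congr fun n => ?_)
  · refine (Set.finite_lt_nat (Fintype.card A)).subset fun n hn => ?_
    obtain ⟨f, hf, -⟩ := Finset.exists_ne_zero_of_sum_ne_zero hn
    have hcard := Fintype.card_le_of_injective f (Finset.mem_filter.1 hf).2.1.injective
    rwa [Fintype.card_fin] at hcard
  · exact (map_sum (MvPowerSeries.coeff m) _ _).trans
      (Finset.sum_congr rfl fun f _ => mul_boole _ _)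

open Classical in
theorem coeff_chainSeries [Fintype A] (ρ : A → ℕ) (φ : IncidenceAlgebra k A) (t : A)
    (m : Option ℕ →₀ ℕ) :
    MvPowerSeries.coeff m (chainSeries ρ φ t) =
      ((fun x => if m none = ρ x then 1 else 0) ᵥ*
        ((tExponents m).map (rankStep ρ φ)).prod) t := by
  obtain ⟨n, p, hp⟩ : ∃ (n : ℕ) (p : Fin n → ℕ), tExponents m = List.ofFn p :=
    ⟨_, _, (List.ofFn_get _).symm⟩
  have hp0 (i : Fin n) : p i ≠ 0 :=
    ne_zero_of_mem_tExponents (hp ▸ List.mem_ofFn.2 ⟨i, rfl⟩)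
  rw [coeff_chainSeries_eq_finsum, hp, List.map_ofFn, vecMul_prod_ofFn, finsum_eq_single _ n]
  · simp only [Function.comp_apply, prod_rankStep, ite_zero_mul_ite_zero, one_mul, List.ofFn_inj,
      funext_iff, eq_comm (a := p _)]
    refine Finset.sum_subset (Finset.monotone_filter_right _ fun f _ hf => hf.2) fun f hf hnot => ?_
    have hnot' : ¬ StrictMono f := fun hmono =>
      hnot (Finset.mem_filter.2 ⟨Finset.mem_univ f, hmono, (Finset.mem_filter.1 hf).2⟩)
    exact ite_eq_right_iff.2 fun h =>
      prod_eq_zero_of_not_strictMono φ (fun i => (h.2 i).trans_ne (hp0 i)) hnot'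
  · refine fun l hl => Finset.sum_eq_zero fun f _ => if_neg fun h => hl ?_
    simpa using (congrArg List.length h.2).symm

end Coefficients

section Multichains

variable {k A B : Type*} [CommRing k]

/-- The exponent of the monomial `s^{ρ x₀} t₁^{ρ x₁ - ρ x₀} ⋯ t_N^{ρ x_N - ρ x_{N-1}}` of the
multichain `x₀ ≤ ⋯ ≤ x_N`. -/
def multichainExponent (ρ : A → ℕ) {N : ℕ} (f : Fin (N + 1) → A) : Option ℕ →₀ ℕ :=
  Finsupp.single none (ρ (f 0)) +
    ∑ i : Fin N, Finsupp.single (some (i : ℕ)) (ρ (f i.succ) - ρ (f i.castSucc))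

theorem multichainExponent_none (ρ : A → ℕ) {N : ℕ} (f : Fin (N + 1) → A) :
    multichainExponent ρ f none = ρ (f 0) := by
  simp [multichainExponent]

theorem multichainExponent_some (ρ : A → ℕ) {N : ℕ} (f : Fin (N + 1) → A) (i : Fin N) :
    multichainExponent ρ f (some i) = ρ (f i.succ) - ρ (f i.castSucc) := by
  simp [multichainExponent, Finsupp.single_apply, -Finsupp.single_tsub, Fin.val_inj]

theorem multichainExponent_some_of_le (ρ : A → ℕ) {N : ℕ} (f : Fin (N + 1) → A) {i : ℕ}
    (hi : N ≤ i) : multichainExponent ρ f (some i) = 0 := by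
  simp [multichainExponent, fun j : Fin N => (j.2.trans_le hi).ne]

theorem eq_multichainExponent_iff {ρ : A → ℕ} {N : ℕ} {f : Fin (N + 1) → A} {m : Option ℕ →₀ ℕ}
    (hN : ∀ i, N ≤ i → m (some i) = 0) :
    m = multichainExponent ρ f ↔
      m none = ρ (f 0) ∧ ∀ i : Fin N, ρ (f i.succ) - ρ (f i.castSucc) = m (some i) := by
  refine ⟨?_, fun ⟨hnone, hsome⟩ => Finsupp.ext fun x => ?_⟩
  · rintro rfl
    exact ⟨multichainExponent_none ρ f, fun i => (multichainExponent_some ρ f i).symm⟩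
  · obtain _ | i := x
    · rw [hnone, multichainExponent_none]
    obtain hi | hi := lt_or_ge i N
    · exact (hsome ⟨i, hi⟩).symm.trans (multichainExponent_some ρ f ⟨i, hi⟩).symm
    · rw [hN i hi, multichainExponent_some_of_le ρ f hi]

theorem multichainExponent_prod [PartialOrder A] [PartialOrder B] {ρ : A → ℕ} {σ : B → ℕ}
    (hρ : Monotone ρ) (hσ : Monotone σ) {N : ℕ} {f : Fin (N + 1) → A} {g : Fin (N + 1) → B}
    (hf : Monotone f) (hg : Monotone g) :
    multichainExponent (fun p : A × B => ρ p.1 + σ p.2) (fun i => (f i, g i)) =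
      multichainExponent ρ f + multichainExponent σ g := by
  have hsub (i : Fin N) : ρ (f i.succ) + σ (g i.succ) - (ρ (f i.castSucc) + σ (g i.castSucc)) =
      ρ (f i.succ) - ρ (f i.castSucc) + (σ (g i.succ) - σ (g i.castSucc)) :=
    (tsub_add_tsub_comm (hρ (hf Fin.castSucc_lt_succ.le))
      (hσ (hg Fin.castSucc_lt_succ.le))).symm
  simp only [multichainExponent, hsub, Finsupp.single_add, Finset.sum_add_distrib,
    add_add_add_comm]

variable [PartialOrder A] [PartialOrder B]

open Classical in
/-- The generating function, in `s` and the first `N` of the variables `tᵢ`, of the multichains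
`x₀ ≤ ⋯ ≤ x_N = t` weighted by the product of the values of `φ` on their steps. The sum is over all
sequences, as `φ` vanishes on some step of one that is not a multichain. -/
def multichainSeries [Fintype A] (N : ℕ) (ρ : A → ℕ) (φ : IncidenceAlgebra k A) (t : A) :
    MvPowerSeries (Option ℕ) k :=
  ∑ f : Fin (N + 1) → A with f (Fin.last N) = t,
    MvPowerSeries.monomial (multichainExponent ρ f) (∏ i : Fin N, φ (f i.castSucc) (f i.succ))

theorem multichainSeries_mul [Fintype A] [Fintype B] {N : ℕ} {ρ : A → ℕ} {σ : B → ℕ}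
    (hρ : Monotone ρ) (hσ : Monotone σ)
    (φ : IncidenceAlgebra k A) (ψ : IncidenceAlgebra k B) (t : A) (u : B) :
    multichainSeries N (fun p : A × B => ρ p.1 + σ p.2) (φ.prod ψ) (t, u) =
      multichainSeries N ρ φ t * multichainSeries N σ ψ u := by
  classical
  simp only [multichainSeries, Finset.sum_filter, Finset.sum_mul_sum, ← Fintype.sum_prod_type']
  rw [← (Equiv.arrowProdEquivProdArrow _ _ _).symm.sum_comp]
  refine Finset.sum_congr rfl fun ⟨f, g⟩ _ => ?_
  simp only [Equiv.arrowProdEquivProdArrow_symm_apply, IncidenceAlgebra.prod_mk, Prod.mk.injEq,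
    Finset.prod_mul_distrib, ite_zero_mul_ite_zero]
  congr 1
  by_cases hf : Monotone f
  · by_cases hg : Monotone g
    · rw [MvPowerSeries.monomial_mul_monomial, ← multichainExponent_prod hρ hσ hf hg]
      rfl
    · rw [prod_eq_zero_of_not_monotone ψ hg, mul_zero, map_zero, map_zero, mul_zero]
  · rw [prod_eq_zero_of_not_monotone φ hf, zero_mul, map_zero, map_zero, zero_mul]

end Multichains

section ChainSeriesProduct

variable {k : Type} [CommRing k] {A B : Type} [PartialOrder A] [PartialOrder B]

/-- Trivial steps have weight `1`, so a strict chain can be padded to a multichain at the variables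
missing from a monomial. -/
theorem coeff_chainSeries_eq_coeff_multichainSeries [Fintype A] {N : ℕ} {ρ : A → ℕ}
    (hρ : StrictMono ρ) {φ : IncidenceAlgebra k A} (hφ : ∀ x, φ x x = 1) (t : A) {m : Option ℕ →₀ ℕ}
    (hN : ∀ i, N ≤ i → m (some i) = 0) :
    MvPowerSeries.coeff m (chainSeries ρ φ t) =
      MvPowerSeries.coeff m (multichainSeries N ρ φ t) := by
  classical
  rw [coeff_chainSeries, prod_map_tExponents (rankStep_zero hρ hφ) hN,
    vecMul_prod_ofFn, multichainSeries, map_sum]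
  refine Finset.sum_congr rfl fun f _ => ?_
  rw [prod_rankStep, MvPowerSeries.coeff_monomial, ite_zero_mul_ite_zero, one_mul]
  simp only [eq_multichainExponent_iff hN]

theorem chainSeries_mul [Finite A] [Finite B] {ρ : A → ℕ} {σ : B → ℕ}
    (hρ : StrictMono ρ) (hσ : StrictMono σ) {φ : IncidenceAlgebra k A} {ψ : IncidenceAlgebra k B}
    (hφ : ∀ x, φ x x = 1) (hψ : ∀ x, ψ x x = 1) (t : A) (u : B) :
    chainSeries (fun p : A × B => ρ p.1 + σ p.2) (φ.prod ψ) (t, u) =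
      chainSeries ρ φ t * chainSeries σ ψ u := by
  classical
  cases nonempty_fintype A
  cases nonempty_fintype B
  ext m
  obtain ⟨N, hN⟩ : ∃ N, ∀ i, N ≤ i → m (some i) = 0 := by
    obtain ⟨N, hN⟩ := (tpart m).support.exists_nat_subset_range
    exact ⟨N, fun i hi => by_contra fun h =>
      hi.not_gt (Finset.mem_range.1 (hN (Finsupp.mem_support_iff.2 h)))⟩
  have hprod : StrictMono fun p : A × B => ρ p.1 + σ p.2 := fun p q hpq => by
    obtain ⟨h1, h2⟩ | ⟨h1, h2⟩ := Prod.lt_iff.1 hpq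
    · exact add_lt_add_of_lt_of_le (hρ h1) (hσ.monotone h2)
    · exact add_lt_add_of_le_of_lt (hρ.monotone h1) (hσ h2)
  rw [coeff_chainSeries_eq_coeff_multichainSeries hprod (by simp [hφ, hψ]) _ hN,
    multichainSeries_mul hρ.monotone hσ.monotone, MvPowerSeries.coeff_mul, MvPowerSeries.coeff_mul]
  refine Finset.sum_congr rfl fun p hp => ?_
  obtain rfl := Finset.HasAntidiagonal.mem_antidiagonal.1 hp
  have hN' (i : ℕ) (hi : N ≤ i) : p.1 (some i) = 0 ∧ p.2 (some i) = 0 := by simpa using hN i hi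
  rw [coeff_chainSeries_eq_coeff_multichainSeries hρ hφ t fun i hi => (hN' i hi).1,
    coeff_chainSeries_eq_coeff_multichainSeries hσ hψ u fun i hi => (hN' i hi).2]

end ChainSeriesProduct

section DiamondProduct

theorem IsCharacter.chainSeries_mul {k A B : Type} [Field k] [PartialOrder A] [PartialOrder B]
    [Finite A] [Finite B] {G : AB k →ₗ[k] k} (hG : IsCharacter k G) {ρ : A → ℕ} {σ : B → ℕ}
    (hρ : ∀ x y, x ⋖ y → ρ y = ρ x + 1) (hσ : ∀ x y, x ⋖ y → σ y = σ x + 1) (t : A) (u : B) :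
    chainSeries (fun p : A × B => ρ p.1 + σ p.2)
        (psiIncidence G fun p : A × B => ρ p.1 + σ p.2) (t, u) =
      chainSeries ρ (psiIncidence G ρ) t * chainSeries σ (psiIncidence G σ) u := by
  classical
  cases nonempty_fintype A
  cases nonempty_fintype B
  have := Fintype.toLocallyFiniteOrder (α := A)
  have := Fintype.toLocallyFiniteOrder (α := B)
  rw [hG.psiIncidence_prod hρ hσ]
  exact Tcheb.chainSeries_mul (strictMono_of_covBy_eq_add_one hρ)
    (strictMono_of_covBy_eq_add_one hσ) (psiIncidence_self G ρ) (psiIncidence_self G σ) t u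

variable {α : Type} [PartialOrder α] [OrderBot α]

/-- The rank function of the poset `P ∖ {0̂}`, whose minimal elements are the atoms of `P`. It is
additive for the diamond product, as `(P ◇ Q) ∖ {0̂} = (P ∖ {0̂}) × (Q ∖ {0̂})`. -/
def atomRank (rk : α → ℕ) (x : {x : α // x ≠ ⊥}) : ℕ :=
  rk x - 1

theorem range_subtype_ne_bot :
    Set.range (OrderEmbedding.subtype fun x : α => x ≠ ⊥) = Set.Ioi ⊥ := by
  ext x
  simp [bot_lt_iff_ne_bot]

theorem IsRankFun.atomRank_add_one [Finite α] {rk : α → ℕ} (h : IsRankFun α rk)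
    (x : {x : α // x ≠ ⊥}) : rk x = atomRank rk x + 1 := by
  classical
  cases nonempty_fintype α
  have := Fintype.toLocallyFiniteOrder (α := α)
  have hpos := strictMono_of_covBy_eq_add_one h.2 (bot_lt_iff_ne_bot.2 x.2)
  exact (Nat.sub_add_cancel (Nat.one_le_of_lt hpos)).symm

theorem IsRankFun.atomRank_covBy [Finite α] {rk : α → ℕ} (h : IsRankFun α rk)
    (x y : {x : α // x ≠ ⊥}) (hxy : x ⋖ y) : atomRank rk y = atomRank rk x + 1 := by
  have hcov : (x : α) ⋖ y :=
    (Set.OrdConnected.apply_covBy_apply_iff (OrderEmbedding.subtype fun z : α => z ≠ ⊥)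
      (range_subtype_ne_bot (α := α) ▸ Set.ordConnected_Ioi)).2 hxy
  rw [atomRank, h.2 _ _ hcov, Nat.add_sub_cancel, h.atomRank_add_one]

theorem gFB_bot_eq_chainSeries [Finite α] {k : Type} [Field k] (G : AB k →ₗ[k] k) {rk : α → ℕ}
    (h : IsRankFun α rk) (t : {x : α // x ≠ ⊥}) : gFB k G (· < ·) rk ⊥ t =
      chainSeries (atomRank rk) (psiIncidence G (atomRank rk)) t :=
  gFB_eq_chainSeries G (OrderEmbedding.subtype _) range_subtype_ne_bot h.atomRank_add_one t

end DiamondProduct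

theorem chain_map_first_kind_multiplicative
    (k : Type) [Field k] (G : AB k →ₗ[k] k) (hG : IsCharacter k G)
    (α β : Type) [Fintype α] [Fintype β] [PartialOrder α] [PartialOrder β]
    [BoundedOrder α] [BoundedOrder β] (rkα : α → ℕ) (rkβ : β → ℕ)
    (hα : IsRankFun α rkα) (hβ : IsRankFun β rkβ)
    (h1α : 1 ≤ rkα (⊤ : α)) (h1β : 1 ≤ rkβ (⊤ : β)) :
    gFB k G (· < ·)
        (fun d : WithBot ({x : α // x ≠ ⊥} × {y : β // y ≠ ⊥}) =>
          match d with
          | none => 0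
          | some p => rkα p.1.1 + rkβ p.2.1 - 1)
        (⊥ : WithBot ({x : α // x ≠ ⊥} × {y : β // y ≠ ⊥}))
        ((⟨⟨⊤, by intro hc; rw [hc, hα.1] at h1α; omega⟩,
           ⟨⊤, by intro hc; rw [hc, hβ.1] at h1β; omega⟩⟩ :
          ({x : α // x ≠ ⊥} × {y : β // y ≠ ⊥})) :
            WithBot ({x : α // x ≠ ⊥} × {y : β // y ≠ ⊥})) =
      gFB k G (· < ·) rkα (⊥ : α) (⊤ : α) * gFB k G (· < ·) rkβ (⊥ : β) (⊤ : β) := by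
  have hdiamond (p : {x : α // x ≠ ⊥} × {y : β // y ≠ ⊥}) :
      rkα p.1 + rkβ p.2 - 1 = atomRank rkα p.1 + atomRank rkβ p.2 + 1 := by
    rw [hα.atomRank_add_one, hβ.atomRank_add_one]
    omega
  refine (gFB_eq_chainSeries G (ρ := fun p : _ × _ => atomRank rkα p.1 + atomRank rkβ p.2)
    WithBot.coeOrderHom WithBot.range_coe hdiamond _).trans ?_
  rw [hG.chainSeries_mul hα.atomRank_covBy hβ.atomRank_covBy,
    ← gFB_bot_eq_chainSeries G hα, ← gFB_bot_eq_chainSeries G hβ]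

end Tcheb
end
end
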